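/- Let α, h ∈ ℝ with α > −2. Assume there exist an open set U ⊆ ℝ² containing (α,h) and a continuously differentiable map u* : U → (0,1) such that for every (a,b) ∈ U the point u*(a,b) is the unique maximizer over [0,1] of u ↦ (a/6)u³ + (b/2)u − (1/2)I(u), and such that (a,b) ↦ f_{a,b} is real analytic on U. Then lim_{n→∞} (6/n²)·Ê_{n;α,h}(⌊T(x)/n⌋) = u*(α,h)³. -/

import Mathlib

/-!
Since `log Ẑ` is convex in `α` with derivative `Ê⌊T/n⌋`, the mean is a subgradient
(`mul_expHat_le`): `t Ê⌊T/n⌋ ≤ log Ẑ(α + t) - log Ẑ(α)` for every real `t`. If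
`n⁻² log Ẑ → max φ`, where `φ = phiET`, then the right side divided by `n²` tends to
`max φ_{α+t} - max φ_α`, which is at most `t v³ / 6` with `v = u*(α + t, h)`, because `v` is a
competitor in the second maximum. Small `t` of both signs and continuity of `u*` give the limit.

The lower bound on `log Ẑ` is the Gibbs variational principle with product Bernoulli measures
(`le_log_Zhat`).

The upper bound, valid for `α ≥ -2`, avoids graph limits. Condition on (pin) all edges at a set `S`
of boundedly many vertices. Second moments of conditional edge probabilities are bounded and
increase with `S`, so some `S` of size at most `K` makes them almost insensitive to pinning one
more vertex (`exists_pinning`; exchangeability makes this uniform over edges and vertices). Two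
edges of a triangle are determined by pinning their common vertex, hence the edges of a free
triangle are almost conditionally independent on average (`triangle_mean_near`). Gibbs' inequality
against a conditional product measure bounds the entropy by that of the conditional edge
probabilities, up to the `O(n)` pinned edges (`log_Zhat_le_pin`). What is left is a mean-field
functional of three identically distributed edge probabilities, bounded by its best constant
(`mean_field_le`): by the inequality of arithmetic and geometric means for `α ≥ 0`, and because
`I'' ≥ 4` dominates the cubic interaction for `-2 ≤ α ≤ 0`.
-/

open MeasureTheory Filter ProbabilityTheory Topology

noncomputable section

/-- The edge set of the complete graph on `n` vertices: unordered pairs of distinct vertices. -/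
abbrev Edge (n : ℕ) := {e : Sym2 (Fin n) // ¬ e.IsDiag}

/-- A configuration `x ∈ {0,1}^{E_n}`, i.e. a simple graph on `[n]`. -/
abbrev Config (n : ℕ) := Edge n → Bool

/-- `E(x)`: the number of edges of the configuration `x`. -/
def edgeCount (n : ℕ) (x : Config n) : ℕ :=
  (Finset.univ.filter fun e : Edge n => x e).card

/-- `T(x)`: the number of triangles of the configuration `x` (one for each 3-element
set of vertices all of whose connecting edges are present). -/
def triangleCount (n : ℕ) (x : Config n) : ℕ :=
  ((Finset.powersetCard 3 (Finset.univ : Finset (Fin n))).filter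
    (fun s => ∀ e : Edge n, (∀ v ∈ (e : Sym2 (Fin n)), v ∈ s) → x e)).card

/-- `⌊T(x)/n⌋` as a real number (natural division is floor division). -/
def floorTn (n : ℕ) (x : Config n) : ℝ := ((triangleCount n x / n : ℕ) : ℝ)

/-- `{T(x)/n}`: the fractional part of `T(x)/n`. -/
def fracTn (n : ℕ) (x : Config n) : ℝ :=
  (triangleCount n x : ℝ) / n - floorTn n x

/-- The modified Hamiltonian `Ĥ_{n;α,h}(x) = α⌊T(x)/n⌋ + h E(x)`. -/
def hamHat (n : ℕ) (α h : ℝ) (x : Config n) : ℝ :=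
  α * floorTn n x + h * (edgeCount n x : ℝ)

/-- The edge-triangle Hamiltonian `H_{n;α,h}(x) = (α/n) T(x) + h E(x)`. -/
def ham (n : ℕ) (α h : ℝ) (x : Config n) : ℝ :=
  (α / n) * (triangleCount n x : ℝ) + h * (edgeCount n x : ℝ)

/-- The partition function `Ẑ_{n;α,h}`. -/
def Zhat (n : ℕ) (α h : ℝ) : ℝ := ∑ x : Config n, Real.exp (hamHat n α h x)

/-- The partition function `Z_{n;α,h}`. -/
def Zet (n : ℕ) (α h : ℝ) : ℝ := ∑ x : Config n, Real.exp (ham n α h x)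

/-- Expectation `Ê_{n;α,h}` with respect to the Gibbs measure of `Ĥ`. -/
def expHat (n : ℕ) (α h : ℝ) (f : Config n → ℝ) : ℝ :=
  (∑ x : Config n, f x * Real.exp (hamHat n α h x)) / Zhat n α h

/-- Expectation `E_{n;α,h}` with respect to the Gibbs measure of `H`. -/
def expEt (n : ℕ) (α h : ℝ) (f : Config n → ℝ) : ℝ :=
  (∑ x : Config n, f x * Real.exp (ham n α h x)) / Zet n α h

/-- Variance `V̂ar_{n;α,h}` with respect to the Gibbs measure of `Ĥ`. -/
def varHat (n : ℕ) (α h : ℝ) (f : Config n → ℝ) : ℝ :=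
  expHat n α h (fun x => (f x - expHat n α h f) ^ 2)

/-- Probability of an event under the Gibbs measure of `Ĥ`. -/
def probHat (n : ℕ) (α h : ℝ) (A : Config n → Prop) : ℝ :=
  expHat n α h (fun x => Set.indicator {y | A y} (fun _ => (1 : ℝ)) x)

/-- `I(u) = u ln u + (1-u) ln (1-u)` (with the convention `ln 0 = 0`, so `I(0)=I(1)=0`). -/
def Ifun (u : ℝ) : ℝ := u * Real.log u + (1 - u) * Real.log (1 - u)

/-- The variational functional `u ↦ (a/6)u³ + (b/2)u − (1/2)I(u)`. -/
def phiET (a b u : ℝ) : ℝ := a / 6 * u ^ 3 + b / 2 * u - 1 / 2 * Ifun u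

/-- The limiting free energy `f_{a,b} = sup_{u∈[0,1]} φ_{a,b}(u)`. -/
def freeEnergy (a b : ℝ) : ℝ := sSup (phiET a b '' Set.Icc 0 1)

/-- `W_n` built from the integer part of the normalized triangle count. -/
def Wfl (n : ℕ) (α h : ℝ) (x : Config n) : ℝ :=
  Real.sqrt 6 * (floorTn n x - expHat n α h (floorTn n)) / n

/-- `√6 (T(x)/n − Ê(T/n))/n`, the normalized fluctuation of the triangle density. -/
def Wre (n : ℕ) (α h : ℝ) (x : Config n) : ℝ :=
  Real.sqrt 6 * ((triangleCount n x : ℝ) / n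
    - expHat n α h (fun y => (triangleCount n y : ℝ) / n)) / n

/-- The scaled cumulant generating function of `⌊T/n⌋`. -/
def cgf (n : ℕ) (α h : ℝ) (t : ℝ) : ℝ :=
  6 / (n : ℝ) ^ 2 * Real.log (expHat n α h (fun x => Real.exp (t * floorTn n x)))

/-! ### Means and conditional means on a finite probability space -/

section FiniteProbability

variable {Ω β γ : Type*} [Fintype Ω]

/-- The mean of `f` under the weights `p` on a finite space. -/
def wmean (p : Ω → ℝ) (f : Ω → ℝ) : ℝ := ∑ ω, p ω * f ω

open Classical in
/-- The conditional mean of `f` given the value of `π`, under the weights `p`. -/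
def cmean (p : Ω → ℝ) (π : Ω → β) (f : Ω → ℝ) (ω : Ω) : ℝ :=
  (∑ ω', if π ω' = π ω then p ω' * f ω' else 0) / ∑ ω', if π ω' = π ω then p ω' else 0

variable {p : Ω → ℝ}

lemma wmean_add (f g : Ω → ℝ) : wmean p (fun ω => f ω + g ω) = wmean p f + wmean p g := by
  simp [wmean, mul_add, Finset.sum_add_distrib]

lemma wmean_sub (f g : Ω → ℝ) : wmean p (fun ω => f ω - g ω) = wmean p f - wmean p g := by
  simp [wmean, mul_sub, Finset.sum_sub_distrib]

lemma wmean_const_mul (c : ℝ) (f : Ω → ℝ) : wmean p (fun ω => c * f ω) = c * wmean p f := by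
  simp only [wmean, Finset.mul_sum]
  exact Finset.sum_congr rfl fun _ _ => by ring

lemma wmean_const (h1 : ∑ ω, p ω = 1) (c : ℝ) : wmean p (fun _ => c) = c := by
  simp [wmean, ← Finset.sum_mul, h1]

lemma wmean_sum {ι : Type*} (s : Finset ι) (f : ι → Ω → ℝ) :
    wmean p (fun ω => ∑ i ∈ s, f i ω) = ∑ i ∈ s, wmean p (f i) := by
  simp only [wmean, Finset.mul_sum]
  exact Finset.sum_comm

lemma wmean_mono (hp : ∀ ω, 0 < p ω) {f g : Ω → ℝ} (hfg : ∀ ω, f ω ≤ g ω) :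
    wmean p f ≤ wmean p g :=
  Finset.sum_le_sum fun ω _ => mul_le_mul_of_nonneg_left (hfg ω) (hp ω).le

lemma wmean_sq_le (hp : ∀ ω, 0 < p ω) (h1 : ∑ ω, p ω = 1) (f : Ω → ℝ) :
    wmean p f ^ 2 ≤ wmean p (fun ω => f ω ^ 2) := by
  have h : 0 ≤ wmean p (fun ω => (f ω - wmean p f) ^ 2) :=
    Finset.sum_nonneg fun ω _ => mul_nonneg (hp ω).le (sq_nonneg _)
  have e : (fun ω => (f ω - wmean p f) ^ 2)
      = fun ω => (f ω ^ 2 - (2 * wmean p f) * f ω) + wmean p f ^ 2 := by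
    funext ω; ring
  rw [e, wmean_add, wmean_sub, wmean_const_mul, wmean_const h1] at h
  nlinarith

/-- Jensen's inequality for the exponential. -/
lemma exp_wmean_le (hp : ∀ ω, 0 < p ω) (h1 : ∑ ω, p ω = 1) (f : Ω → ℝ) :
    Real.exp (wmean p f) ≤ wmean p (fun ω => Real.exp (f ω)) := by
  have := convexOn_exp.map_sum_le (t := Finset.univ) (w := p) (p := f)
    (fun ω _ => (hp ω).le) h1 (fun _ _ => Set.mem_univ _)
  simpa [wmean] using this

/-- Gibbs' inequality (nonnegativity of relative entropy). -/
lemma wmean_log_le (hp : ∀ ω, 0 < p ω) (h1 : ∑ ω, p ω = 1) {q : Ω → ℝ} (hq : ∀ ω, 0 < q ω)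
    (hq1 : ∑ ω, q ω = 1) :
    wmean p (fun ω => Real.log (q ω)) ≤ wmean p (fun ω => Real.log (p ω)) := by
  have h : ∀ ω, p ω * Real.log (q ω) - p ω * Real.log (p ω) ≤ q ω - p ω := by
    intro ω
    have := Real.log_le_sub_one_of_pos (div_pos (hq ω) (hp ω))
    rw [Real.log_div (hq ω).ne' (hp ω).ne'] at this
    have h2 := mul_le_mul_of_nonneg_left this (hp ω).le
    have h3 : p ω * (q ω / p ω - 1) = q ω - p ω := by
      field_simp [(hp ω).ne']
    linarith
  have := Finset.sum_le_sum fun ω (_ : ω ∈ Finset.univ) => h ω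
  rw [Finset.sum_sub_distrib, Finset.sum_sub_distrib, hq1, h1] at this
  unfold wmean
  linarith

lemma cmean_congr (p : Ω → ℝ) (π : Ω → β) (f : Ω → ℝ) {ω ω' : Ω} (h : π ω = π ω') :
    cmean p π f ω = cmean p π f ω' := by
  simp only [cmean]; rw [h]

open Classical in
lemma cmean_den_pos (hp : ∀ ω, 0 < p ω) (π : Ω → β) (ω : Ω) :
    0 < ∑ ω', if π ω' = π ω then p ω' else 0 := by
  refine Finset.sum_pos' (fun ω' _ => ?_) ⟨ω, Finset.mem_univ _, by simpa using hp ω⟩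
  split_ifs
  exacts [(hp ω').le, le_rfl]

/-- The defining property of the conditional mean. -/
lemma wmean_cmean_mul (hp : ∀ ω, 0 < p ω) (π : Ω → β) (f g : Ω → ℝ)
    (hg : ∀ ω ω', π ω = π ω' → g ω = g ω') :
    wmean p (fun ω => cmean p π f ω * g ω) = wmean p (fun ω => f ω * g ω) := by
  classical
  have e : ∀ ω, p ω * (cmean p π f ω * g ω)
      = ∑ ω', if π ω' = π ω then p ω * (p ω' * f ω' * g ω' /
          ∑ ω'', if π ω'' = π ω' then p ω'' else 0) else 0 := by
    intro ω
    rw [cmean, div_mul_eq_mul_div, Finset.sum_mul, Finset.sum_div, Finset.mul_sum]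
    refine Finset.sum_congr rfl fun ω' _ => ?_
    split_ifs with h
    · rw [hg ω ω' h.symm, h]
    · simp
  unfold wmean
  rw [Finset.sum_congr rfl fun ω _ => e ω, Finset.sum_comm]
  refine Finset.sum_congr rfl fun ω' _ => ?_
  have hB := (cmean_den_pos hp π ω').ne'
  calc _ = (∑ ω, if π ω = π ω' then p ω else 0) * (p ω' * f ω' * g ω' /
          ∑ ω'', if π ω'' = π ω' then p ω'' else 0) := by
        rw [Finset.sum_mul]
        refine Finset.sum_congr rfl fun ω _ => ?_
        simp only [eq_comm (a := π ω')]
        split_ifs <;> simp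
    _ = _ := by field_simp

lemma wmean_cmean (hp : ∀ ω, 0 < p ω) (π : Ω → β) (f : Ω → ℝ) :
    wmean p (cmean p π f) = wmean p f := by
  simpa using wmean_cmean_mul hp π f (fun _ => 1) (fun _ _ _ => rfl)

lemma cmean_pos (hp : ∀ ω, 0 < p ω) (π : Ω → β) (f : Ω → ℝ) (hf : ∀ ω, 0 ≤ f ω) (ω : Ω)
    (h : ∃ ω', π ω' = π ω ∧ 0 < f ω') : 0 < cmean p π f ω := by
  classical
  obtain ⟨ω₀, h0, hf0⟩ := h
  refine div_pos (Finset.sum_pos' (fun ω' _ => ?_) ⟨ω₀, Finset.mem_univ _, ?_⟩)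
    (cmean_den_pos hp π ω)
  · split_ifs
    exacts [mul_nonneg (hp ω').le (hf ω'), le_rfl]
  · rw [if_pos h0]
    exact mul_pos (hp _) hf0

lemma cmean_one_sub (hp : ∀ ω, 0 < p ω) (π : Ω → β) (f : Ω → ℝ) (ω : Ω) :
    cmean p π (fun ω => 1 - f ω) ω = 1 - cmean p π f ω := by
  classical
  have hB := (cmean_den_pos hp π ω).ne'
  unfold cmean
  rw [eq_sub_iff_add_eq, ← add_div, ← Finset.sum_add_distrib, div_eq_one_iff_eq hB]
  refine Finset.sum_congr rfl fun ω' _ => ?_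
  split_ifs <;> ring

/-- Pythagoras: refining the conditioning from `π` to `π'` increases the second moment of the
conditional mean by exactly the squared distance of the two conditional means. -/
lemma wmean_sq_cmean_sub (hp : ∀ ω, 0 < p ω) (π : Ω → β) (π' : Ω → γ)
    (hr : ∀ ω ω', π' ω = π' ω' → π ω = π ω') (f : Ω → ℝ) :
    wmean p (fun ω => (cmean p π' f ω - cmean p π f ω) ^ 2)
      = wmean p (fun ω => cmean p π' f ω ^ 2) - wmean p (fun ω => cmean p π f ω ^ 2) := by
  have e : (fun ω => (cmean p π' f ω - cmean p π f ω) ^ 2)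
      = fun ω => (cmean p π' f ω ^ 2 - 2 * (cmean p π' f ω * cmean p π f ω))
        + cmean p π f ω ^ 2 := by funext ω; ring
  have h1 := wmean_cmean_mul hp π' f (cmean p π f)
    (fun ω ω' h => cmean_congr p π f (hr ω ω' h))
  have h2 := wmean_cmean_mul hp π f (cmean p π f) (fun ω ω' h => cmean_congr p π f h)
  have h3 : wmean p (fun ω => cmean p π f ω ^ 2) = wmean p (fun ω => f ω * cmean p π f ω) := by
    rw [← h2]; simp only [pow_two]
  rw [e, wmean_add, wmean_sub, wmean_const_mul, h1, h3]
  ring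

/-- If refining the conditioning from `π` to `π'` moves the conditional mean of `f` by at most `δ`
in `L²`, then `f` may be replaced by its `π`-conditional mean against every `π'`-measurable test
function bounded by one. -/
lemma abs_wmean_sub_le (hp : ∀ ω, 0 < p ω) (h1 : ∑ ω, p ω = 1) (π : Ω → β) (π' : Ω → γ)
    (f g : Ω → ℝ) (hg : ∀ ω ω', π' ω = π' ω' → g ω = g ω') (hg1 : ∀ ω, |g ω| ≤ 1) {δ : ℝ}
    (hδ : 0 ≤ δ)
    (h : wmean p (fun ω => (cmean p π' f ω - cmean p π f ω) ^ 2) ≤ δ ^ 2) :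
    |wmean p (fun ω => f ω * g ω) - wmean p (fun ω => cmean p π f ω * g ω)| ≤ δ := by
  rw [← wmean_cmean_mul hp π' f g hg, ← wmean_sub]
  apply abs_le_of_sq_le_sq _ hδ
  refine (wmean_sq_le hp h1 _).trans (le_trans (wmean_mono hp fun ω => ?_) h)
  have : g ω ^ 2 ≤ 1 := by
    rw [← sq_abs]; exact pow_le_one₀ (abs_nonneg _) (hg1 ω)
  rw [← sub_mul, mul_pow]
  exact mul_le_of_le_one_right (sq_nonneg _) this

lemma wmean_equiv (e : Ω ≃ Ω) (he : ∀ ω, p (e ω) = p ω) (f : Ω → ℝ) :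
    wmean p (fun ω => f (e ω)) = wmean p f := by
  unfold wmean
  rw [← Equiv.sum_comp e (fun ω => p ω * f ω)]
  simp only [he]

lemma cmean_equiv (e : Ω ≃ Ω) (he : ∀ ω, p (e ω) = p ω) (π : Ω → β) (π' : Ω → γ)
    (hr : ∀ ω ω', π (e ω) = π (e ω') ↔ π' ω = π' ω') (f : Ω → ℝ) (ω : Ω) :
    cmean p π f (e ω) = cmean p π' (fun ω => f (e ω)) ω := by
  classical
  unfold cmean
  rw [← Equiv.sum_comp e, ← Equiv.sum_comp e (fun ω' => if π ω' = π (e ω) then p ω' else 0)]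
  simp only [hr, he]

end FiniteProbability

/-! ### Vertex permutations acting on configurations -/

/-- The edge joining two distinct vertices. -/
def mkEdge {n : ℕ} {i j : Fin n} (hij : i ≠ j) : Edge n := ⟨s(i, j), by simpa using hij⟩

/-- The edge variable `x_e` as a real number. -/
def edgeVar {n : ℕ} (e : Edge n) (x : Config n) : ℝ := if x e then 1 else 0

/-- The action of a vertex permutation on edges. -/
def permEdge {n : ℕ} (σ : Equiv.Perm (Fin n)) : Edge n ≃ Edge n where
  toFun e := ⟨Sym2.map σ e, by rw [Sym2.isDiag_map σ.injective]; exact e.2⟩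
  invFun e := ⟨Sym2.map σ.symm e, by rw [Sym2.isDiag_map σ.symm.injective]; exact e.2⟩
  left_inv e := by ext1; simp [Sym2.map_map]
  right_inv e := by ext1; simp [Sym2.map_map]

/-- The action of a vertex permutation on configurations, by relabelling: `x ↦ x ∘ σ`. -/
def permConfig {n : ℕ} (σ : Equiv.Perm (Fin n)) : Config n ≃ Config n :=
  Equiv.arrowCongr (permEdge σ).symm (Equiv.refl Bool)

lemma permConfig_apply {n : ℕ} (σ : Equiv.Perm (Fin n)) (x : Config n) (e : Edge n) :
    permConfig σ x e = x (permEdge σ e) := rfl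

lemma permEdge_mkEdge {n : ℕ} (σ : Equiv.Perm (Fin n)) {i j : Fin n} (hij : i ≠ j) :
    permEdge σ (mkEdge hij) = mkEdge (σ.injective.ne hij) := rfl

lemma edgeVar_permConfig {n : ℕ} (σ : Equiv.Perm (Fin n)) (e : Edge n) (x : Config n) :
    edgeVar e (permConfig σ x) = edgeVar (permEdge σ e) x := rfl

lemma edgeVar_nonneg {n : ℕ} (e : Edge n) (x : Config n) : 0 ≤ edgeVar e x := by
  unfold edgeVar; split_ifs <;> norm_num

lemma edgeVar_le_one {n : ℕ} (e : Edge n) (x : Config n) : edgeVar e x ≤ 1 := by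
  unfold edgeVar; split_ifs <;> norm_num

lemma edgeCount_permConfig {n : ℕ} (σ : Equiv.Perm (Fin n)) (x : Config n) :
    edgeCount n (permConfig σ x) = edgeCount n x := by
  refine Finset.card_equiv (permEdge σ) fun e => ?_
  rw [Finset.mem_filter, Finset.mem_filter, permConfig_apply]
  simp

lemma triangleCount_permConfig {n : ℕ} (σ : Equiv.Perm (Fin n)) (x : Config n) :
    triangleCount n (permConfig σ x) = triangleCount n x := by
  refine Finset.card_equiv (Equiv.finsetCongr σ) fun s => ?_
  rw [Finset.mem_filter, Finset.mem_filter]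
  simp only [Finset.mem_powersetCard, Finset.subset_univ, true_and,
    Equiv.finsetCongr_apply, Finset.card_map, permConfig_apply]
  refine and_congr_right fun _ => Iff.intro (fun h e he => ?_) (fun h e he => ?_)
  · have := h ((permEdge σ).symm e) (by
      intro v hv
      obtain ⟨w, hw, rfl⟩ := Sym2.mem_map.1 hv
      simpa using he w hw)
    simpa using this
  · refine h _ fun v hv => ?_
    obtain ⟨w, hw, rfl⟩ := Sym2.mem_map.1 hv
    simpa using he w hw

lemma hamHat_permConfig {n : ℕ} (σ : Equiv.Perm (Fin n)) (α h : ℝ) (x : Config n) :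
    hamHat n α h (permConfig σ x) = hamHat n α h x := by
  simp [hamHat, floorTn, edgeCount_permConfig, triangleCount_permConfig]

/-- The permutations preserving `S` act transitively on triples of distinct vertices outside
`S`. -/
lemma exists_perm {n : ℕ} (S : Finset (Fin n)) {a b c a' b' c' : Fin n}
    (hab : a ≠ b) (hac : a ≠ c) (hbc : b ≠ c) (hab' : a' ≠ b') (hac' : a' ≠ c') (hbc' : b' ≠ c')
    (ha : a ∉ S) (hb : b ∉ S) (hc : c ∉ S) (ha' : a' ∉ S) (hb' : b' ∉ S) (hc' : c' ∉ S) :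
    ∃ σ : Equiv.Perm (Fin n), σ a = a' ∧ σ b = b' ∧ σ c = c' ∧ ∀ v, σ v ∈ S ↔ v ∈ S := by
  -- a swap of two vertices outside `S` preserves `S`
  have hsw : ∀ u w v : Fin n, u ∉ S → w ∉ S → (Equiv.swap u w v ∈ S ↔ v ∈ S) := by
    intro u w v hu hw
    rcases eq_or_ne v u with rfl | h1
    · simp [hu, hw]
    rcases eq_or_ne v w with rfl | h2
    · simp [hu, hw]
    rw [Equiv.swap_apply_of_ne_of_ne h1 h2]
  set s1 := Equiv.swap a a' with hs1
  set s2 := Equiv.swap (s1 b) b' with hs2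
  set s3 := Equiv.swap (s2 (s1 c)) c' with hs3
  have e1 : s1 a = a' := Equiv.swap_apply_left _ _
  have hb1 : s1 b ∉ S := by rwa [hsw _ _ _ ha ha']
  have hc2 : s2 (s1 c) ∉ S := by rwa [hsw _ _ _ hb1 hb', hsw _ _ _ ha ha']
  have n1 : a' ≠ s1 b := by rw [← e1]; exact s1.injective.ne hab
  have e2a : s2 a' = a' := Equiv.swap_apply_of_ne_of_ne n1 hab'
  have e2b : s2 (s1 b) = b' := Equiv.swap_apply_left _ _
  have n2 : a' ≠ s2 (s1 c) := by
    rw [← e2a, ← e1]; exact s2.injective.ne (s1.injective.ne hac)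
  have n3 : b' ≠ s2 (s1 c) := by
    rw [← e2b]; exact s2.injective.ne (s1.injective.ne hbc)
  refine ⟨s3 * s2 * s1, ?_, ?_, ?_, fun v => ?_⟩
  · simp only [Equiv.Perm.mul_apply, e1, e2a]
    exact Equiv.swap_apply_of_ne_of_ne n2 hac'
  · simp only [Equiv.Perm.mul_apply, e2b]
    exact Equiv.swap_apply_of_ne_of_ne n3 hbc'
  · simp only [Equiv.Perm.mul_apply]
    exact Equiv.swap_apply_left _ _
  · simp only [Equiv.Perm.mul_apply]
    rw [hsw _ _ _ hc2 hc', hsw _ _ _ hb1 hb', hsw _ _ _ ha ha']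

/-! ### Edges, triangles and the Gibbs weights -/

lemma edgeCount_eq_sum {n : ℕ} (x : Config n) :
    (edgeCount n x : ℝ) = ∑ e : Edge n, edgeVar e x := by
  simp [edgeCount, edgeVar]

open Classical in
/-- The indicator that all three edges inside the vertex set `s` are present. -/
def triVar {n : ℕ} (s : Finset (Fin n)) (x : Config n) : ℝ :=
  if ∀ e : Edge n, (∀ v ∈ (e : Sym2 (Fin n)), v ∈ s) → x e then 1 else 0

lemma triangleCount_eq_sum {n : ℕ} (x : Config n) :
    (triangleCount n x : ℝ)
      = ∑ s ∈ Finset.powersetCard 3 (Finset.univ : Finset (Fin n)), triVar s x := by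
  classical
  simp only [triangleCount, triVar, Finset.sum_boole]

lemma triVar_eq {n : ℕ} {a b c : Fin n} (hab : a ≠ b) (hac : a ≠ c) (hbc : b ≠ c) (x : Config n) :
    triVar {a, b, c} x
      = edgeVar (mkEdge hab) x * (edgeVar (mkEdge hac) x * edgeVar (mkEdge hbc) x) := by
  classical
  have key : (∀ e : Edge n, (∀ v ∈ (e : Sym2 (Fin n)), v ∈ ({a, b, c} : Finset (Fin n))) → x e)
      ↔ x (mkEdge hab) ∧ x (mkEdge hac) ∧ x (mkEdge hbc) := by
    constructor
    · intro h
      refine ⟨h _ ?_, h _ ?_, h _ ?_⟩ <;> intro v hv <;>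
        · rcases Sym2.mem_iff.1 hv with rfl | rfl <;> simp
    · rintro ⟨h1, h2, h3⟩ ⟨e, he⟩ hv
      induction e with
      | _ i j =>
        have hij : i ≠ j := by simpa using he
        have hi := hv i (Sym2.mem_mk_left i j)
        have hj := hv j (Sym2.mem_mk_right i j)
        simp only [Finset.mem_insert, Finset.mem_singleton] at hi hj
        have sw : ∀ (u w : Fin n) (huw : u ≠ w) (hwu : ¬ (s(w, u) : Sym2 (Fin n)).IsDiag),
            x (mkEdge huw) → x ⟨s(w, u), hwu⟩ := by
          intro u w huw hwu hx
          have : (⟨s(w, u), hwu⟩ : Edge n) = mkEdge huw := Subtype.ext Sym2.eq_swap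
          rwa [this]
        rcases hi with rfl | rfl | rfl <;> rcases hj with rfl | rfl | rfl <;>
          first
          | exact absurd rfl hij
          | assumption
          | exact sw _ _ _ _ h1
          | exact sw _ _ _ _ h2
          | exact sw _ _ _ _ h3
  unfold triVar edgeVar
  simp only [key]
  cases x (mkEdge hab) <;> cases x (mkEdge hac) <;> cases x (mkEdge hbc) <;> simp

lemma card_edge (n : ℕ) : (Fintype.card (Edge n) : ℝ) = (n : ℝ) * (n - 1) / 2 := by
  have h : Fintype.card (Edge n) = (Fintype.card (Fin n)).choose 2 := by
    rw [← Sym2.card_subtype_not_diag]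
  rw [h, Fintype.card_fin, Nat.cast_choose_two]

lemma cast_choose_three (n : ℕ) :
    ((n.choose 3 : ℕ) : ℝ) = (n : ℝ) * (n - 1) * (n - 2) / 6 := by
  induction n with
  | zero => simp
  | succ k ih =>
    rw [Nat.choose_succ_succ, Nat.cast_add, ih, Nat.cast_choose_two]
    push_cast
    ring

/-- The Gibbs weights `P̂_{n;α,h}`. -/
def gibbs (n : ℕ) (α h : ℝ) (x : Config n) : ℝ := Real.exp (hamHat n α h x) / Zhat n α h

lemma Zhat_pos (n : ℕ) (α h : ℝ) : 0 < Zhat n α h :=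
  Finset.sum_pos (fun _ _ => Real.exp_pos _) Finset.univ_nonempty

lemma gibbs_pos (n : ℕ) (α h : ℝ) (x : Config n) : 0 < gibbs n α h x :=
  div_pos (Real.exp_pos _) (Zhat_pos n α h)

lemma gibbs_sum (n : ℕ) (α h : ℝ) : ∑ x, gibbs n α h x = 1 := by
  simp only [gibbs, ← Finset.sum_div]
  exact div_self (Zhat_pos n α h).ne'

lemma log_gibbs (n : ℕ) (α h : ℝ) (x : Config n) :
    Real.log (gibbs n α h x) = hamHat n α h x - Real.log (Zhat n α h) := by
  rw [gibbs, Real.log_div (Real.exp_pos _).ne' (Zhat_pos n α h).ne', Real.log_exp]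

lemma expHat_eq_wmean (n : ℕ) (α h : ℝ) (f : Config n → ℝ) :
    expHat n α h f = wmean (gibbs n α h) f := by
  simp only [expHat, wmean, gibbs, Finset.sum_div]
  exact Finset.sum_congr rfl fun _ _ => by ring

lemma gibbs_permConfig {n : ℕ} (σ : Equiv.Perm (Fin n)) (α h : ℝ) (x : Config n) :
    gibbs n α h (permConfig σ x) = gibbs n α h x := by
  simp only [gibbs, hamHat_permConfig]

lemma abs_floorTn_sub_le (n : ℕ) (x : Config n) :
    |floorTn n x - (triangleCount n x : ℝ) / n| ≤ 1 := by
  have h1 : floorTn n x ≤ (triangleCount n x : ℝ) / n := Nat.cast_div_le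
  have h2 : (triangleCount n x : ℝ) / n ≤ floorTn n x + 1 := by
    rw [floorTn, ← Nat.floor_div_eq_div (K := ℝ)]
    exact (Nat.lt_floor_add_one _).le
  rw [abs_le]; constructor <;> linarith

/-- The Hamiltonian without the integer part differs by at most `|α|`. -/
lemma abs_hamHat_sub_le (n : ℕ) (α h : ℝ) (x : Config n) :
    |hamHat n α h x - (α / n * triangleCount n x + h * edgeCount n x)| ≤ |α| := by
  have e : hamHat n α h x - (α / n * triangleCount n x + h * edgeCount n x)
      = α * (floorTn n x - (triangleCount n x : ℝ) / n) := by
    rw [hamHat]; ring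
  rw [e, abs_mul]
  exact mul_le_of_le_one_right (abs_nonneg _) (abs_floorTn_sub_le n x)

/-! ### Pinning the edges at a vertex set -/

/-- The edge `e` has an endpoint in `S`. -/
def Touches {n : ℕ} (S : Finset (Fin n)) (e : Edge n) : Prop := ∃ v ∈ (e : Sym2 (Fin n)), v ∈ S

open Classical in
/-- The restriction of `x` to the edges touching `S`, extended by `false`; conditioning on
`pin S` is conditioning on all edges with an endpoint in `S`. -/
def pin {n : ℕ} (S : Finset (Fin n)) (x : Config n) : Config n :=
  fun e => if Touches S e then x e else false

lemma pin_eq_iff {n : ℕ} (S : Finset (Fin n)) (x y : Config n) :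
    pin S x = pin S y ↔ ∀ e, Touches S e → x e = y e := by
  constructor
  · intro h e he
    have := congrFun h e
    simpa [pin, he] using this
  · intro h
    funext e
    by_cases he : Touches S e
    · simp [pin, he, h e he]
    · simp [pin, he]

lemma touches_mono {n : ℕ} {S S' : Finset (Fin n)} (hS : S ⊆ S') {e : Edge n}
    (he : Touches S e) : Touches S' e := by
  obtain ⟨v, hv, hvS⟩ := he
  exact ⟨v, hv, hS hvS⟩

lemma pin_mono {n : ℕ} {S S' : Finset (Fin n)} (hS : S ⊆ S') {x y : Config n}
    (h : pin S' x = pin S' y) : pin S x = pin S y := by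
  rw [pin_eq_iff] at h ⊢
  exact fun e he => h e (touches_mono hS he)

lemma edgeVar_congr {n : ℕ} {S : Finset (Fin n)} {e : Edge n} (he : Touches S e) {x y : Config n}
    (h : pin S x = pin S y) : edgeVar e x = edgeVar e y := by
  unfold edgeVar
  rw [(pin_eq_iff S x y).1 h e he]

lemma touches_permEdge {n : ℕ} (σ : Equiv.Perm (Fin n)) {S S' : Finset (Fin n)}
    (hσ : ∀ v, σ v ∈ S' ↔ v ∈ S) (e : Edge n) : Touches S' (permEdge σ e) ↔ Touches S e := by
  constructor
  · rintro ⟨v, hv, hvS⟩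
    obtain ⟨w, hw, rfl⟩ := Sym2.mem_map.1 hv
    exact ⟨w, hw, (hσ w).1 hvS⟩
  · rintro ⟨v, hv, hvS⟩
    exact ⟨σ v, Sym2.mem_map.2 ⟨v, hv, rfl⟩, (hσ v).2 hvS⟩

lemma pin_permConfig {n : ℕ} (σ : Equiv.Perm (Fin n)) {S S' : Finset (Fin n)}
    (hσ : ∀ v, σ v ∈ S' ↔ v ∈ S) (x y : Config n) :
    pin S (permConfig σ x) = pin S (permConfig σ y) ↔ pin S' x = pin S' y := by
  rw [pin_eq_iff, pin_eq_iff]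
  constructor
  · intro h e he
    have := h ((permEdge σ).symm e) (by
      rw [← touches_permEdge σ hσ]; simpa using he)
    simpa [permConfig_apply] using this
  · intro h e he
    exact h _ ((touches_permEdge σ hσ e).2 he)

/-- The conditional edge probability `Ê[x_e | edges touching S]`. -/
def condEdge (n : ℕ) (α h : ℝ) (S : Finset (Fin n)) (e : Edge n) : Config n → ℝ :=
  cmean (gibbs n α h) (pin S) (edgeVar e)

lemma condEdge_congr {n : ℕ} {α h : ℝ} {S S' : Finset (Fin n)} (hS : S ⊆ S') (e : Edge n)
    {x y : Config n} (hxy : pin S' x = pin S' y) :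
    condEdge n α h S e x = condEdge n α h S e y :=
  cmean_congr _ _ _ (pin_mono hS hxy)

/-- Exchangeability of the conditional edge probabilities. -/
lemma condEdge_permConfig {n : ℕ} {α h : ℝ} (σ : Equiv.Perm (Fin n)) {S S' : Finset (Fin n)}
    (hσ : ∀ v, σ v ∈ S' ↔ v ∈ S) (e : Edge n) (x : Config n) :
    condEdge n α h S e (permConfig σ x) = condEdge n α h S' (permEdge σ e) x :=
  cmean_equiv (permConfig σ) (gibbs_permConfig σ α h) (pin S) (pin S')
    (pin_permConfig σ hσ) (edgeVar e) x

lemma condEdge_pos {n : ℕ} {α h : ℝ} {S : Finset (Fin n)} {e : Edge n} (he : ¬ Touches S e)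
    (x : Config n) : 0 < condEdge n α h S e x := by
  classical
  refine cmean_pos (gibbs_pos n α h) _ _ (edgeVar_nonneg e) x ⟨Function.update x e true, ?_, ?_⟩
  · rw [pin_eq_iff]
    intro e' he'
    rw [Function.update_of_ne]
    rintro rfl
    exact he he'
  · simp [edgeVar]

lemma condEdge_lt_one {n : ℕ} {α h : ℝ} {S : Finset (Fin n)} {e : Edge n} (he : ¬ Touches S e)
    (x : Config n) : condEdge n α h S e x < 1 := by
  classical
  rw [← sub_pos, condEdge, ← cmean_one_sub (gibbs_pos n α h)]
  refine cmean_pos (gibbs_pos n α h) _ _ (fun y => sub_nonneg.2 (edgeVar_le_one e y)) x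
    ⟨Function.update x e false, ?_, ?_⟩
  · rw [pin_eq_iff]
    intro e' he'
    rw [Function.update_of_ne]
    rintro rfl
    exact he he'
  · simp [edgeVar]

/-- The squared `L²` change of `Ê[x_e | edges touching S]` when the vertex `v` is added to
`S`. -/
def pinGap (n : ℕ) (α h : ℝ) (S : Finset (Fin n)) (v : Fin n) (e : Edge n) : ℝ :=
  wmean (gibbs n α h)
    (fun x => (condEdge n α h (insert v S) e x - condEdge n α h S e x) ^ 2)

lemma pinGap_perm {n : ℕ} {α h : ℝ} (σ : Equiv.Perm (Fin n)) {S : Finset (Fin n)}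
    (hσ : ∀ v, σ v ∈ S ↔ v ∈ S) (v : Fin n) (e : Edge n) :
    pinGap n α h S (σ v) (permEdge σ e) = pinGap n α h S v e := by
  unfold pinGap
  rw [← wmean_equiv (permConfig σ) (gibbs_permConfig σ α h)
    (fun x => (condEdge n α h (insert v S) e x - condEdge n α h S e x) ^ 2)]
  have hσ' : ∀ w, σ w ∈ insert (σ v) S ↔ w ∈ insert v S := by
    intro w; simp [hσ]
  simp only [condEdge_permConfig σ hσ, condEdge_permConfig σ hσ']

lemma not_touches_mkEdge {n : ℕ} {S : Finset (Fin n)} {i j : Fin n} (hij : i ≠ j) (hi : i ∉ S)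
    (hj : j ∉ S) : ¬ Touches S (mkEdge hij) := by
  rintro ⟨v, hv, hvS⟩
  rcases Sym2.mem_iff.1 hv with rfl | rfl
  exacts [hi hvS, hj hvS]

lemma condEdge_sq_mean_le_one {n : ℕ} {α h : ℝ} {S : Finset (Fin n)} {e : Edge n}
    (he : ¬ Touches S e) :
    wmean (gibbs n α h) (fun x => condEdge n α h S e x ^ 2) ≤ 1 := by
  rw [← wmean_const (gibbs_sum n α h) 1]
  refine wmean_mono (gibbs_pos n α h) fun x => ?_
  exact pow_le_one₀ (condEdge_pos he x).le (condEdge_lt_one he x).le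

/-- The energy-increment step: some set of at most `K` pinned vertices makes the conditional
probabilities of all remaining edges nearly insensitive to pinning one further vertex. The second
moment of `Ê[x_e | edges touching S]` lies in `[0,1]` and increases along `S = {0,…,k-1}`, so one
of the first `K` increments is at most `1/K`; exchangeability carries it to all other vertices
and edges. -/
lemma exists_pinning {n : ℕ} (α h : ℝ) {K : ℕ} (hK : 0 < K) (hn : K + 3 ≤ n) :
    ∃ S : Finset (Fin n), S.card ≤ K ∧ (∃ a b c, a ∉ S ∧ b ∉ S ∧ c ∉ S ∧ a ≠ b ∧ a ≠ c ∧ b ≠ c) ∧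
      ∀ (i j l : Fin n) (hij : i ≠ j), i ≠ l → j ≠ l → i ∉ S → j ∉ S → l ∉ S →
        pinGap n α h S l (mkEdge hij) ≤ 1 / K := by
  classical
  set a : Fin n := ⟨n - 2, by omega⟩ with ha
  set b : Fin n := ⟨n - 1, by omega⟩ with hb
  have hab : a ≠ b := by simp only [ha, hb, ne_eq, Fin.mk.injEq]; omega
  set S : ℕ → Finset (Fin n) := fun k => Finset.univ.filter fun v => v.val < k with hS
  have memS : ∀ k v, v ∈ S k ↔ v.val < k := by intro k v; simp [hS]
  set En : ℕ → ℝ := fun k =>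
    wmean (gibbs n α h) (fun x => condEdge n α h (S k) (mkEdge hab) x ^ 2) with hEn
  have hfree : ∀ k, k ≤ K → a ∉ S k ∧ b ∉ S k := by
    intro k hk
    simp only [memS, ha, hb]; omega
  have hstep : ∀ k (hk : k < K),
      pinGap n α h (S k) ⟨k, by omega⟩ (mkEdge hab) = En (k + 1) - En k := by
    intro k hk
    have hins : insert (⟨k, by omega⟩ : Fin n) (S k) = S (k + 1) := by
      ext v
      simp only [Finset.mem_insert, memS, Fin.ext_iff]; omega
    unfold pinGap
    rw [hins]
    refine wmean_sq_cmean_sub (gibbs_pos n α h) (pin (S k)) (pin (S (k + 1))) ?_ _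
    intro x y hxy
    exact pin_mono (by rw [← hins]; exact Finset.subset_insert _ _) hxy
  have hEK : En K ≤ 1 := condEdge_sq_mean_le_one
    (not_touches_mkEdge hab (hfree K le_rfl).1 (hfree K le_rfl).2)
  have hE0 : 0 ≤ En 0 :=
    Finset.sum_nonneg fun x _ => mul_nonneg (gibbs_pos n α h x).le (sq_nonneg _)
  obtain ⟨k, hk, hkle⟩ : ∃ k, k < K ∧ En (k + 1) - En k ≤ 1 / K := by
    by_contra! hcon
    have h1 : ∑ k ∈ Finset.range K, (1 / K : ℝ) < ∑ k ∈ Finset.range K, (En (k + 1) - En k) :=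
      Finset.sum_lt_sum_of_nonempty (by simpa using hK.ne') fun k hk =>
        hcon k (Finset.mem_range.1 hk)
    rw [Finset.sum_range_sub, Finset.sum_const, Finset.card_range, nsmul_eq_mul,
      mul_one_div_cancel (by positivity)] at h1
    linarith
  obtain ⟨haS, hbS⟩ := hfree k hk.le
  have hcS : (⟨k, by omega⟩ : Fin n) ∉ S k := by simp [memS]
  have hac : a ≠ ⟨k, by omega⟩ := by simp only [ha, ne_eq, Fin.mk.injEq]; omega
  have hbc : b ≠ ⟨k, by omega⟩ := by simp only [hb, ne_eq, Fin.mk.injEq]; omega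
  refine ⟨S k, ?_, ⟨a, b, ⟨k, by omega⟩, haS, hbS, hcS, hab, hac, hbc⟩, ?_⟩
  · have : (S k).card ≤ (Finset.range k).card := by
      refine Finset.card_le_card_of_injOn Fin.val (fun v hv => ?_) Fin.val_injective.injOn
      simpa [memS] using hv
    rw [Finset.card_range] at this
    omega
  · intro i j l hij hil hjl hi hj hl
    obtain ⟨σ, h1, h2, h3, h4⟩ := exists_perm (S k) hab hac hbc hij hil hjl haS hbS hcS hi hj hl
    have hp := pinGap_perm (α := α) (h := h) σ h4 ⟨k, by omega⟩ (mkEdge hab)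
    have he : permEdge σ (mkEdge hab) = mkEdge hij := by
      rw [permEdge_mkEdge]; simp only [h1, h2]
    rw [h3, he, hstep k hk] at hp
    rw [hp]
    exact hkle

/-- On average over the pinned edges, the three edges of a free triangle are nearly conditionally
independent. -/
lemma triangle_mean_near {n : ℕ} {α h : ℝ} {S : Finset (Fin n)} {δ : ℝ} (hδ : 0 ≤ δ)
    (hS : ∀ (i j l : Fin n) (hij : i ≠ j), i ≠ l → j ≠ l → i ∉ S → j ∉ S → l ∉ S →
        pinGap n α h S l (mkEdge hij) ≤ δ ^ 2)
    {a b c : Fin n} (ha : a ∉ S) (hb : b ∉ S) (hc : c ∉ S) (hab : a ≠ b) (hac : a ≠ c)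
    (hbc : b ≠ c) :
    |wmean (gibbs n α h) (fun x => edgeVar (mkEdge hab) x *
        (edgeVar (mkEdge hac) x * edgeVar (mkEdge hbc) x))
      - wmean (gibbs n α h) (fun x => condEdge n α h S (mkEdge hab) x *
        (condEdge n α h S (mkEdge hac) x * condEdge n α h S (mkEdge hbc) x))| ≤ 2 * δ := by
  have tl : ∀ {i j : Fin n} (hij : i ≠ j), Touches (insert j S) (mkEdge hij) :=
    fun {i j} hij => ⟨j, Sym2.mem_mk_right _ _, Finset.mem_insert_self _ _⟩
  have tl' : ∀ {i j : Fin n} (hij : i ≠ j), Touches (insert i S) (mkEdge hij) :=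
    fun {i j} hij => ⟨i, Sym2.mem_mk_left _ _, Finset.mem_insert_self _ _⟩
  have b1 : ∀ {u w : ℝ}, 0 ≤ u → u ≤ 1 → 0 ≤ w → w ≤ 1 → |u * w| ≤ 1 := by
    intro u w h1 h2 h3 h4
    rw [abs_of_nonneg (mul_nonneg h1 h3)]
    exact mul_le_one₀ h2 h3 h4
  have nab := not_touches_mkEdge hab ha hb
  -- replace `x_ab` by its conditional mean: `x_ac`, `x_bc` are edges at `c`
  have s1 := abs_wmean_sub_le (gibbs_pos n α h) (gibbs_sum n α h) (pin S) (pin (insert c S))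
    (edgeVar (mkEdge hab)) (fun x => edgeVar (mkEdge hac) x * edgeVar (mkEdge hbc) x)
    (fun x y hxy => by rw [edgeVar_congr (tl hac) hxy, edgeVar_congr (tl hbc) hxy])
    (fun x => b1 (edgeVar_nonneg _ _) (edgeVar_le_one _ _) (edgeVar_nonneg _ _)
      (edgeVar_le_one _ _)) hδ (hS a b c hab hac hbc ha hb hc)
  -- replace `x_ac` by its conditional mean: `x_bc` is an edge at `b`
  have s2 := abs_wmean_sub_le (gibbs_pos n α h) (gibbs_sum n α h) (pin S) (pin (insert b S))
    (edgeVar (mkEdge hac)) (fun x => condEdge n α h S (mkEdge hab) x * edgeVar (mkEdge hbc) x)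
    (fun x y hxy => by
      rw [edgeVar_congr (tl' hbc) hxy, condEdge_congr (Finset.subset_insert b S) _ hxy])
    (fun x => b1 (condEdge_pos nab x).le (condEdge_lt_one nab x).le (edgeVar_nonneg _ _)
      (edgeVar_le_one _ _)) hδ (hS a c b hac hab hbc.symm ha hc hb)
  -- `x_bc` now only multiplies a function of the pinned edges
  have s3 := wmean_cmean_mul (gibbs_pos n α h) (pin S) (edgeVar (mkEdge hbc))
    (fun x => condEdge n α h S (mkEdge hab) x * condEdge n α h S (mkEdge hac) x)
    (fun x y hxy => by
      rw [condEdge_congr (Finset.Subset.refl S) _ hxy,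
        condEdge_congr (Finset.Subset.refl S) (mkEdge hac) hxy])
  have e1 : wmean (gibbs n α h) (fun x => cmean (gibbs n α h) (pin S) (edgeVar (mkEdge hab)) x *
        (edgeVar (mkEdge hac) x * edgeVar (mkEdge hbc) x))
      = wmean (gibbs n α h) (fun x => edgeVar (mkEdge hac) x *
        (condEdge n α h S (mkEdge hab) x * edgeVar (mkEdge hbc) x)) := by
    congr 1; funext x; simp only [condEdge]; ring
  have e2 : wmean (gibbs n α h) (fun x => cmean (gibbs n α h) (pin S) (edgeVar (mkEdge hac)) x *
        (condEdge n α h S (mkEdge hab) x * edgeVar (mkEdge hbc) x))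
      = wmean (gibbs n α h) (fun x => edgeVar (mkEdge hbc) x *
        (condEdge n α h S (mkEdge hab) x * condEdge n α h S (mkEdge hac) x)) := by
    congr 1; funext x; simp only [condEdge]; ring
  have e3 : wmean (gibbs n α h) (fun x => cmean (gibbs n α h) (pin S) (edgeVar (mkEdge hbc)) x *
        (condEdge n α h S (mkEdge hab) x * condEdge n α h S (mkEdge hac) x))
      = wmean (gibbs n α h) (fun x => condEdge n α h S (mkEdge hab) x *
        (condEdge n α h S (mkEdge hac) x * condEdge n α h S (mkEdge hbc) x)) := by
    congr 1; funext x; simp only [condEdge]; ring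
  rw [e1] at s1
  rw [e2, ← s3, e3] at s2
  rw [abs_le] at s1 s2 ⊢
  constructor <;> linarith [s1.1, s1.2, s2.1, s2.2]

/-! ### The entropy bound -/

lemma sum_prod_bool {ι : Type*} [Fintype ι] [DecidableEq ι] (g : ι → Bool → ℝ) :
    ∑ z : ι → Bool, ∏ i, g i (z i) = ∏ i, (g i true + g i false) := by
  have := Finset.prod_univ_sum (fun _ : ι => (Finset.univ : Finset Bool)) g
  simp only [Fintype.piFinset_univ, Fintype.sum_bool] at this
  exact this.symm

open Classical in
/-- The trial distribution for Gibbs' inequality: uniform on the pinned edges and, given these, a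
product of Bernoulli laws with the conditional edge probabilities as parameters. -/
def trial (n : ℕ) (α h : ℝ) (S : Finset (Fin n)) (x : Config n) : ℝ :=
  (1 / 2) ^ Fintype.card {e : Edge n // Touches S e} *
    ∏ e : {e : Edge n // ¬ Touches S e},
      if x e then condEdge n α h S e x else 1 - condEdge n α h S e x

lemma trial_factor_pos {n : ℕ} {α h : ℝ} {S : Finset (Fin n)}
    (e : {e : Edge n // ¬ Touches S e}) (x : Config n) :
    0 < (if x e then condEdge n α h S e x else 1 - condEdge n α h S e x) := by
  split_ifs
  · exact condEdge_pos e.2 x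
  · exact sub_pos.2 (condEdge_lt_one e.2 x)

lemma trial_pos (n : ℕ) (α h : ℝ) (S : Finset (Fin n)) (x : Config n) :
    0 < trial n α h S x :=
  mul_pos (by positivity) (Finset.prod_pos fun e _ => trial_factor_pos e x)

lemma trial_sum (n : ℕ) (α h : ℝ) (S : Finset (Fin n)) : ∑ x, trial n α h S x = 1 := by
  classical
  let E := Equiv.piEquivPiSubtypeProd (Touches S) (fun _ : Edge n => Bool)
  have hE1 : ∀ y z (e : {e : Edge n // ¬ Touches S e}), E.symm (y, z) e = z e := by
    intro y z e
    simp [E, Equiv.piEquivPiSubtypeProd, e.2]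
  have hE2 : ∀ y z z', pin S (E.symm (y, z)) = pin S (E.symm (y, z')) := by
    intro y z z'
    rw [pin_eq_iff]
    intro e he
    simp [E, Equiv.piEquivPiSubtypeProd, he]
  rw [← Equiv.sum_comp E.symm, Fintype.sum_prod_type]
  have inner : ∀ y : {e : Edge n // Touches S e} → Bool,
      ∑ z, trial n α h S (E.symm (y, z))
        = (1 / 2) ^ Fintype.card {e : Edge n // Touches S e} := by
    intro y
    have hw : ∀ z (e : Edge n), condEdge n α h S e (E.symm (y, z))
        = condEdge n α h S e (E.symm (y, fun _ => true)) :=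
      fun z e => condEdge_congr (Finset.Subset.refl S) e (hE2 y z _)
    set g : {e : Edge n // ¬ Touches S e} → Bool → ℝ := fun e t =>
      if t then condEdge n α h S e (E.symm (y, fun _ => true))
      else 1 - condEdge n α h S e (E.symm (y, fun _ => true)) with hg
    have hz : ∀ z, trial n α h S (E.symm (y, z))
        = (1 / 2) ^ Fintype.card {e : Edge n // Touches S e} *
          ∏ e : {e : Edge n // ¬ Touches S e}, g e (z e) := by
      intro z
      unfold trial
      refine congrArg _ (Finset.prod_congr rfl fun e _ => ?_)
      simp only [hE1, hw z, hg]
    rw [Finset.sum_congr rfl fun z _ => hz z, ← Finset.mul_sum]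
    have hone : ∏ e, (g e true + g e false) = 1 := by simp [hg]
    have hsum := (sum_prod_bool g).trans hone
    convert mul_one _
  rw [Finset.sum_congr rfl fun y _ => inner y, Finset.sum_const, Finset.card_univ,
    Fintype.card_fun, Fintype.card_bool, nsmul_eq_mul]
  push_cast
  rw [← mul_pow]
  norm_num

open Classical in
/-- Upper bound on the log-partition function by energy plus conditional entropy. -/
lemma log_Zhat_le_pin (n : ℕ) (α h : ℝ) (S : Finset (Fin n)) :
    Real.log (Zhat n α h) ≤ wmean (gibbs n α h) (hamHat n α h)
      + Fintype.card {e : Edge n // Touches S e} * Real.log 2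
      - ∑ e : {e : Edge n // ¬ Touches S e},
          wmean (gibbs n α h) (fun x => Ifun (condEdge n α h S e x)) := by
  have hG := wmean_log_le (gibbs_pos n α h) (gibbs_sum n α h) (trial_pos n α h S)
    (trial_sum n α h S)
  simp only [log_gibbs] at hG
  rw [wmean_sub, wmean_const (gibbs_sum n α h)] at hG
  have hlog : ∀ x, Real.log (trial n α h S x)
      = -(Fintype.card {e : Edge n // Touches S e} * Real.log 2)
        + ∑ e : {e : Edge n // ¬ Touches S e},
          (edgeVar (e : Edge n) x * Real.log (condEdge n α h S e x)
            + (1 - edgeVar (e : Edge n) x) * Real.log (1 - condEdge n α h S e x)) := by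
    intro x
    unfold trial
    rw [Real.log_mul (by positivity) (Finset.prod_pos fun e _ => trial_factor_pos e x).ne',
      Real.log_prod fun e _ => (trial_factor_pos e x).ne', Real.log_pow, one_div, Real.log_inv]
    congr 1
    · ring
    · refine Finset.sum_congr rfl fun e _ => ?_
      unfold edgeVar
      cases x e <;> simp
  have hI : ∀ e : {e : Edge n // ¬ Touches S e},
      wmean (gibbs n α h) (fun x => edgeVar (e : Edge n) x * Real.log (condEdge n α h S e x)
            + (1 - edgeVar (e : Edge n) x) * Real.log (1 - condEdge n α h S e x))
        = wmean (gibbs n α h) (fun x => Ifun (condEdge n α h S e x)) := by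
    intro e
    unfold Ifun
    rw [wmean_add, wmean_add]
    congr 1
    · refine (wmean_cmean_mul (gibbs_pos n α h) (pin S) (edgeVar (e : Edge n)) _ ?_).symm
      intro x y hxy
      rw [condEdge_congr (Finset.Subset.refl S) _ hxy]
    · have := (wmean_cmean_mul (gibbs_pos n α h) (pin S) (fun x => 1 - edgeVar (e : Edge n) x)
        (fun x => Real.log (1 - condEdge n α h S e x)) ?_).symm
      · rw [this]
        simp only [cmean_one_sub (gibbs_pos n α h), condEdge]
      · intro x y hxy
        rw [condEdge_congr (Finset.Subset.refl S) _ hxy]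
  simp only [hlog] at hG
  rw [wmean_add, wmean_const (gibbs_sum n α h), wmean_sum, Finset.sum_congr rfl fun e _ => hI e]
    at hG
  linarith

open Classical in
lemma card_touches_le {n : ℕ} (S : Finset (Fin n)) :
    Fintype.card {e : Edge n // Touches S e} ≤ S.card * n := by
  have : Fintype.card {e : Edge n // Touches S e}
      ≤ ((S ×ˢ (Finset.univ : Finset (Fin n))).image fun q => s(q.1, q.2)).card := by
    rw [← Finset.card_univ]
    refine Finset.card_le_card_of_injOn (fun e => ((e : Edge n) : Sym2 (Fin n))) ?_ ?_
    · rintro ⟨e, v, hv, hvS⟩ -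
      obtain ⟨w, hw⟩ := Sym2.mem_iff_exists.1 hv
      simp only [Finset.coe_image, Set.mem_image, Finset.mem_coe, Finset.mem_product,
        Finset.mem_univ, and_true]
      exact ⟨(v, w), hvS, hw.symm⟩
    · intro e _ e' _ hee
      exact Subtype.ext (Subtype.ext hee)
  refine this.trans (Finset.card_image_le.trans ?_)
  simp

/-! ### The mean-field functional -/

lemma Ifun_eq (u : ℝ) : Ifun u = -Real.binEntropy u := by
  rw [Ifun, Real.binEntropy]
  simp only [Real.log_inv]; ring

lemma Ifun_nonpos {u : ℝ} (h0 : 0 ≤ u) (h1 : u ≤ 1) : Ifun u ≤ 0 := by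
  rw [Ifun_eq]
  linarith [Real.binEntropy_nonneg h0 h1]

/-- Strong convexity of `I` (with `I'' ≥ 4`) along the segment between two interior points. -/
lemma Ifun_strong {u w : ℝ} (hu0 : 0 < u) (hu1 : u < 1) (hw0 : 0 < w) (hw1 : w < 1) :
    Ifun u + (Real.log u - Real.log (1 - u)) * (w - u) + 2 * (w - u) ^ 2 ≤ Ifun w := by
  set g : ℝ → ℝ := fun t => Ifun t - 2 * t ^ 2 with hg
  have hd : ∀ t ∈ Set.Ioo (0 : ℝ) 1,
      HasDerivAt g (Real.log t - Real.log (1 - t) - 4 * t) t := by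
    intro t ht
    have h1 : HasDerivAt (fun t : ℝ => Real.binEntropy t) _ t :=
      Real.hasDerivAt_binEntropy ht.1.ne' ht.2.ne
    have h2 : g = fun t => -Real.binEntropy t - 2 * t ^ 2 := by
      funext t; simp [hg, Ifun_eq]
    rw [h2]
    refine HasDerivAt.congr_deriv (h1.neg.sub ((hasDerivAt_pow 2 t).const_mul 2)) ?_
    norm_num; ring
  have hmono : MonotoneOn (fun t => Real.log t - Real.log (1 - t) - 4 * t) (Set.Ioo (0 : ℝ) 1) := by
    have hd2 : ∀ t ∈ Set.Ioo (0 : ℝ) 1,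
        HasDerivAt (fun t => Real.log t - Real.log (1 - t) - 4 * t)
          (t⁻¹ + (1 - t)⁻¹ - 4) t := by
      intro t ht
      have a1 := Real.hasDerivAt_log ht.1.ne'
      have a2 := ((hasDerivAt_id t).const_sub 1).log (by simpa using (sub_pos.2 ht.2).ne')
      have a3 := (hasDerivAt_id t).const_mul 4
      refine HasDerivAt.congr_deriv ((a1.sub a2).sub a3) ?_
      simp [neg_div]
    refine monotoneOn_of_deriv_nonneg (convex_Ioo 0 1)
      (fun t ht => (hd2 t ht).continuousAt.continuousWithinAt) ?_ ?_
    · rw [interior_Ioo]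
      exact fun t ht => (hd2 t ht).differentiableAt.differentiableWithinAt
    · rw [interior_Ioo]
      intro t ht
      rw [(hd2 t ht).deriv]
      have p1 := ht.1
      have p2 : 0 < 1 - t := sub_pos.2 ht.2
      have : t⁻¹ + (1 - t)⁻¹ - 4 = (1 - 2 * t) ^ 2 / (t * (1 - t)) := by
        field_simp; ring
      rw [this]; positivity
  have hconv : ConvexOn ℝ (Set.Ioo (0 : ℝ) 1) g := by
    refine MonotoneOn.convexOn_of_deriv (convex_Ioo 0 1)
      (fun t ht => (hd t ht).continuousAt.continuousWithinAt) ?_ ?_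
    · rw [interior_Ioo]
      exact fun t ht => (hd t ht).differentiableAt.differentiableWithinAt
    · rw [interior_Ioo]
      exact hmono.congr fun t ht => (hd t ht).deriv.symm
  have key : g u + (Real.log u - Real.log (1 - u) - 4 * u) * (w - u) ≤ g w := by
    rcases lt_trichotomy u w with h | h | h
    · have := hconv.le_slope_of_hasDerivAt ⟨hu0, hu1⟩ ⟨hw0, hw1⟩ h (hd u ⟨hu0, hu1⟩)
      rw [slope_def_field, le_div_iff₀ (by linarith)] at this
      linarith
    · subst h; simp
    · have := hconv.slope_le_of_hasDerivAt ⟨hw0, hw1⟩ ⟨hu0, hu1⟩ h (hd u ⟨hu0, hu1⟩)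
      rw [slope_def_field, div_le_iff₀ (by linarith)] at this
      linarith
  simp only [hg] at key
  nlinarith [key]

/-- The deterministic inequality behind the concave regime `-2 ≤ α ≤ 0`: relative to the tangent
at `u`, the cubic interaction is dominated by the strong convexity of `I`. -/
lemma interaction_le {α u a b c : ℝ} (hα : -2 ≤ α) (hα0 : α ≤ 0) (hu0 : 0 ≤ u) (hu1 : u ≤ 1)
    (ha0 : 0 ≤ a) (ha1 : a ≤ 1) (hb0 : 0 ≤ b) (hb1 : b ≤ 1) (hc0 : 0 ≤ c) (hc1 : c ≤ 1) :
    α / 6 * (a * (b * c)) ≤ α / 6 * (u ^ 3 + u ^ 2 * ((a - u) + (b - u) + (c - u)))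
      + ((a - u) ^ 2 + (b - u) ^ 2 + (c - u) ^ 2) / 3 := by
  -- each cross term carries a coefficient in `[0, 1]`
  have cross : ∀ x y z : ℝ, 0 ≤ z → z ≤ 1 →
      -((x - u) * (y - u) * ((2 * u + z) / 3)) ≤ ((x - u) ^ 2 + (y - u) ^ 2) / 2 := by
    intro x y z hz0 hz1
    have h1 : -((x - u) * (y - u)) ≤ ((x - u) ^ 2 + (y - u) ^ 2) / 2 := by
      nlinarith [sq_nonneg ((x - u) + (y - u))]
    have h2 : 0 ≤ ((x - u) ^ 2 + (y - u) ^ 2) / 2 := by positivity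
    have h3 : (2 * u + z) / 3 ≤ 1 := by linarith
    have h4 : 0 ≤ (2 * u + z) / 3 := by positivity
    calc _ = -((x - u) * (y - u)) * ((2 * u + z) / 3) := by ring
      _ ≤ ((x - u) ^ 2 + (y - u) ^ 2) / 2 * ((2 * u + z) / 3) :=
        mul_le_mul_of_nonneg_right h1 h4
      _ ≤ _ := mul_le_of_le_one_right h2 h3
  have k1 := cross a b c hc0 hc1
  have k2 := cross a c b hb0 hb1
  have k3 := cross b c a ha0 ha1
  have e : a * (b * c) = u ^ 3 + u ^ 2 * ((a - u) + (b - u) + (c - u))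
      + ((a - u) * (b - u) * ((2 * u + c) / 3) + (a - u) * (c - u) * ((2 * u + b) / 3)
        + (b - u) * (c - u) * ((2 * u + a) / 3)) := by ring
  set X := (a - u) * (b - u) * ((2 * u + c) / 3) + (a - u) * (c - u) * ((2 * u + b) / 3)
        + (b - u) * (c - u) * ((2 * u + a) / 3) with hX
  set Q := (a - u) ^ 2 + (b - u) ^ 2 + (c - u) ^ 2 with hQ
  have hXQ : -X ≤ Q := by rw [hX, hQ]; linarith
  have hQ0 : 0 ≤ Q := by rw [hQ]; positivity
  have : α / 6 * X ≤ Q / 3 := by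
    have : (-α / 6) * (-X) ≤ (-α / 6) * Q := mul_le_mul_of_nonneg_left hXQ (by linarith)
    nlinarith
  rw [e, mul_add]
  linarith

/-- The mean-field bound: for random edge probabilities `A, B, C` on a triangle with equal means and
equal mean entropies, energy plus entropy never beats the best constant. For `α ≥ 0` this follows
from `ABC ≤ (A³ + B³ + C³)/3`; for `-2 ≤ α ≤ 0` from comparison with the tangent at the common
mean. -/
lemma mean_field_le {Ω : Type*} [Fintype Ω] {p : Ω → ℝ} (hp : ∀ ω, 0 < p ω) (h1 : ∑ ω, p ω = 1)
    {α h M : ℝ} (hα : -2 ≤ α) (hM : ∀ u ∈ Set.Icc (0 : ℝ) 1, phiET α h u ≤ M)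
    {A B C : Ω → ℝ} (hA : ∀ ω, A ω ∈ Set.Ioo (0 : ℝ) 1) (hB : ∀ ω, B ω ∈ Set.Ioo (0 : ℝ) 1)
    (hC : ∀ ω, C ω ∈ Set.Ioo (0 : ℝ) 1)
    (mB : wmean p B = wmean p A) (mC : wmean p C = wmean p A)
    (iB : wmean p (fun ω => Ifun (B ω)) = wmean p (fun ω => Ifun (A ω)))
    (iC : wmean p (fun ω => Ifun (C ω)) = wmean p (fun ω => Ifun (A ω))) :
    α / 6 * wmean p (fun ω => A ω * (B ω * C ω)) + h / 2 * wmean p A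
      - 1 / 2 * wmean p (fun ω => Ifun (A ω)) ≤ M := by
  have hG : wmean p (fun ω => α / 6 * (A ω * (B ω * C ω)) + h / 6 * (A ω + B ω + C ω)
        - 1 / 6 * (Ifun (A ω) + Ifun (B ω) + Ifun (C ω)))
      = α / 6 * wmean p (fun ω => A ω * (B ω * C ω)) + h / 2 * wmean p A
      - 1 / 2 * wmean p (fun ω => Ifun (A ω)) := by
    simp only [wmean_sub, wmean_add, wmean_const_mul, mB, mC, iB, iC]
    ring
  rw [← hG]
  rcases le_total 0 α with hα0 | hα0
  · rw [← wmean_const h1 M]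
    refine wmean_mono hp fun ω => ?_
    obtain ⟨a0, a1⟩ := hA ω
    obtain ⟨b0, b1⟩ := hB ω
    obtain ⟨c0, c1⟩ := hC ω
    have k1 := hM _ ⟨a0.le, a1.le⟩
    have k2 := hM _ ⟨b0.le, b1.le⟩
    have k3 := hM _ ⟨c0.le, c1.le⟩
    have amgm : A ω * (B ω * C ω) ≤ (A ω ^ 3 + B ω ^ 3 + C ω ^ 3) / 3 := by
      nlinarith [mul_nonneg (add_pos (add_pos a0 b0) c0).le
        (add_nonneg (add_nonneg (sq_nonneg (A ω - B ω)) (sq_nonneg (A ω - C ω)))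
          (sq_nonneg (B ω - C ω)))]
    have := mul_le_mul_of_nonneg_left amgm (by linarith : 0 ≤ α / 6)
    unfold phiET at k1 k2 k3
    linarith
  · set u := wmean p A with hu
    have hne : (Finset.univ : Finset Ω).Nonempty := by
      by_contra hcon
      rw [Finset.not_nonempty_iff_eq_empty] at hcon
      simp [hcon] at h1
    have hu0 : 0 < u := Finset.sum_pos (fun ω _ => mul_pos (hp ω) (hA ω).1) hne
    have hu1 : u < 1 := by
      rw [← h1, hu]
      exact Finset.sum_lt_sum_of_nonempty hne
        fun ω _ => mul_lt_of_lt_one_right (hp ω) (hA ω).2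
    refine le_trans ?_ (hM u ⟨hu0.le, hu1.le⟩)
    set κ := α / 6 * u ^ 2 + h / 6 - 1 / 6 * (Real.log u - Real.log (1 - u)) with hκ
    have hlin : wmean p (fun ω => phiET α h u + κ * ((A ω + B ω + C ω) - 3 * u))
        = phiET α h u := by
      rw [wmean_add, wmean_const h1, wmean_const_mul, wmean_sub, wmean_const h1, wmean_add,
        wmean_add, mB, mC, ← hu]
      ring
    rw [← hlin]
    refine wmean_mono hp fun ω => ?_
    obtain ⟨a0, a1⟩ := hA ω
    obtain ⟨b0, b1⟩ := hB ω
    obtain ⟨c0, c1⟩ := hC ω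
    have k0 := interaction_le hα hα0 hu0.le hu1.le a0.le a1.le b0.le b1.le c0.le c1.le
    have k1 := Ifun_strong hu0 hu1 a0 a1
    have k2 := Ifun_strong hu0 hu1 b0 b1
    have k3 := Ifun_strong hu0 hu1 c0 c1
    rw [hκ]
    unfold phiET
    linarith

/-! ### Upper bound on the free energy -/

lemma exists_perm_edge {n : ℕ} (S : Finset (Fin n)) {a b c : Fin n} (ha : a ∉ S) (hb : b ∉ S)
    (hc : c ∉ S) (hab : a ≠ b) (hac : a ≠ c) (hbc : b ≠ c) (e : Edge n) (he : ¬ Touches S e) :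
    ∃ σ : Equiv.Perm (Fin n), permEdge σ (mkEdge hab) = e ∧ ∀ v, σ v ∈ S ↔ v ∈ S := by
  obtain ⟨e, hd⟩ := e
  induction e with
  | _ i j =>
    have hij : i ≠ j := by simpa using hd
    have hi : i ∉ S := fun h => he ⟨i, Sym2.mem_mk_left _ _, h⟩
    have hj : j ∉ S := fun h => he ⟨j, Sym2.mem_mk_right _ _, h⟩
    obtain ⟨l, hl, hil, hjl⟩ : ∃ l, l ∉ S ∧ i ≠ l ∧ j ≠ l := by
      by_contra! hcon
      have h1 := hcon a ha
      have h2 := hcon b hb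
      have h3 := hcon c hc
      grind
    obtain ⟨σ, h1, h2, -, h4⟩ := exists_perm S hab hac hbc hij hil hjl ha hb hc hi hj hl
    refine ⟨σ, ?_, h4⟩
    rw [permEdge_mkEdge]
    simp only [h1, h2]
    rfl

lemma wmean_edgeVar_eq {n : ℕ} {α h : ℝ} {a b c : Fin n} (hab : a ≠ b) (hac : a ≠ c)
    (hbc : b ≠ c) (e : Edge n) :
    wmean (gibbs n α h) (edgeVar e) = wmean (gibbs n α h) (edgeVar (mkEdge hab)) := by
  obtain ⟨σ, rfl, -⟩ := exists_perm_edge (∅ : Finset (Fin n)) (by simp) (by simp) (by simp)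
    hab hac hbc e (by rintro ⟨v, -, hv⟩; simp at hv)
  exact wmean_equiv (permConfig σ) (gibbs_permConfig σ α h) (edgeVar (mkEdge hab))

lemma wmean_Ifun_condEdge_eq {n : ℕ} {α h : ℝ} {S : Finset (Fin n)} {a b c : Fin n} (ha : a ∉ S)
    (hb : b ∉ S) (hc : c ∉ S) (hab : a ≠ b) (hac : a ≠ c) (hbc : b ≠ c) (e : Edge n)
    (he : ¬ Touches S e) :
    wmean (gibbs n α h) (fun x => Ifun (condEdge n α h S e x))
      = wmean (gibbs n α h) (fun x => Ifun (condEdge n α h S (mkEdge hab) x)) := by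
  obtain ⟨σ, rfl, hσ⟩ := exists_perm_edge S ha hb hc hab hac hbc e he
  rw [← wmean_equiv (permConfig σ) (gibbs_permConfig σ α h)
    (fun x => Ifun (condEdge n α h S (mkEdge hab) x))]
  simp only [condEdge_permConfig σ hσ]

lemma wmean_edgeCount {n : ℕ} {α h : ℝ} {a b c : Fin n} (hab : a ≠ b) (hac : a ≠ c)
    (hbc : b ≠ c) :
    wmean (gibbs n α h) (fun x => (edgeCount n x : ℝ))
      = (n : ℝ) * (n - 1) / 2 * wmean (gibbs n α h) (edgeVar (mkEdge hab)) := by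
  simp only [edgeCount_eq_sum]
  rw [wmean_sum, Finset.sum_congr rfl fun e _ => wmean_edgeVar_eq hab hac hbc e,
    Finset.sum_const, Finset.card_univ, nsmul_eq_mul, card_edge]

lemma wmean_triangleCount {n : ℕ} {α h : ℝ} {a b c : Fin n} (hab : a ≠ b) (hac : a ≠ c)
    (hbc : b ≠ c) :
    wmean (gibbs n α h) (fun x => (triangleCount n x : ℝ))
      = (n : ℝ) * (n - 1) * (n - 2) / 6 * wmean (gibbs n α h) (fun x => edgeVar (mkEdge hab) x *
        (edgeVar (mkEdge hac) x * edgeVar (mkEdge hbc) x)) := by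
  simp only [triangleCount_eq_sum]
  rw [wmean_sum]
  have key : ∀ s ∈ Finset.powersetCard 3 (Finset.univ : Finset (Fin n)),
      wmean (gibbs n α h) (triVar s) = wmean (gibbs n α h) (fun x => edgeVar (mkEdge hab) x *
        (edgeVar (mkEdge hac) x * edgeVar (mkEdge hbc) x)) := by
    intro s hs
    obtain ⟨i, j, l, hij, hil, hjl, rfl⟩ :=
      Finset.card_eq_three.1 (Finset.mem_powersetCard.1 hs).2
    obtain ⟨σ, h1, h2, h3, -⟩ := exists_perm (∅ : Finset (Fin n)) hab hac hbc hij hil hjl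
      (by simp) (by simp) (by simp) (by simp) (by simp) (by simp)
    rw [← wmean_equiv (permConfig σ) (gibbs_permConfig σ α h) (fun x => edgeVar (mkEdge hab) x *
        (edgeVar (mkEdge hac) x * edgeVar (mkEdge hbc) x))]
    congr 1
    funext x
    rw [triVar_eq hij hil hjl]
    simp only [edgeVar_permConfig, permEdge_mkEdge, h1, h2, h3]
  rw [Finset.sum_congr rfl key, Finset.sum_const, Finset.card_powersetCard, Finset.card_univ,
    Fintype.card_fin, nsmul_eq_mul, cast_choose_three]

set_option maxHeartbeats 1000000 in
/-- Upper bound on the free energy with explicit error: pinning `K` vertices costs entropy at most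
`K n log 2`, and the defect of conditional independence on free triangles costs `|α| δ / 3` per
`n²`. -/
lemma log_Zhat_le {n : ℕ} {α h M δ : ℝ} (hα : -2 ≤ α)
    (hM : ∀ u ∈ Set.Icc (0 : ℝ) 1, phiET α h u ≤ M) {K : ℕ} (hK : 0 < K) (hn : K + 3 ≤ n)
    (hδ : 0 ≤ δ) (hKδ : 1 / (K : ℝ) ≤ δ ^ 2) :
    Real.log (Zhat n α h) ≤ (n : ℝ) ^ 2 * (M + |α| * δ / 3)
      + (2 * |α| + |h| + K * Real.log 2) * n := by
  classical
  obtain ⟨S, hcard, ⟨a, b, c, ha, hb, hc, hab, hac, hbc⟩, hgap⟩ := exists_pinning α h hK hn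
  have hent := log_Zhat_le_pin n α h S
  have nab := not_touches_mkEdge hab ha hb
  have nac := not_touches_mkEdge hac ha hc
  have nbc := not_touches_mkEdge hbc hb hc
  set P := gibbs n α h with hP
  have hP0 : ∀ x, 0 < P x := gibbs_pos n α h
  have hP1 : ∑ x, P x = 1 := gibbs_sum n α h
  set A := condEdge n α h S (mkEdge hab)
  set B := condEdge n α h S (mkEdge hac)
  set C := condEdge n α h S (mkEdge hbc)
  set τ := wmean P (fun x => edgeVar (mkEdge hab) x *
        (edgeVar (mkEdge hac) x * edgeVar (mkEdge hbc) x)) with hτ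
  set t := wmean P (fun x => A x * (B x * C x)) with ht
  set m := wmean P (edgeVar (mkEdge hab)) with hm
  set J := wmean P (fun x => Ifun (A x)) with hJ
  have hτt : |τ - t| ≤ 2 * δ := triangle_mean_near hδ
    (fun i j l hij h1 h2 h3 h4 h5 => (hgap i j l hij h1 h2 h3 h4 h5).trans hKδ)
    ha hb hc hab hac hbc
  have mA : wmean P A = m := wmean_cmean hP0 _ _
  have mB : wmean P B = wmean P A := by
    rw [mA, hm, ← wmean_edgeVar_eq hab hac hbc (mkEdge hac)]; exact wmean_cmean hP0 _ _
  have mC : wmean P C = wmean P A := by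
    rw [mA, hm, ← wmean_edgeVar_eq hab hac hbc (mkEdge hbc)]; exact wmean_cmean hP0 _ _
  have hmf := mean_field_le hP0 hP1 hα hM
    (fun x => ⟨condEdge_pos nab x, condEdge_lt_one nab x⟩)
    (fun x => ⟨condEdge_pos nac x, condEdge_lt_one nac x⟩)
    (fun x => ⟨condEdge_pos nbc x, condEdge_lt_one nbc x⟩) mB mC
    (wmean_Ifun_condEdge_eq ha hb hc hab hac hbc _ nac)
    (wmean_Ifun_condEdge_eq ha hb hc hab hac hbc _ nbc)
  change α / 6 * t + h / 2 * wmean P A - 1 / 2 * J ≤ M at hmf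
  rw [mA] at hmf
  have hτ0 : 0 ≤ τ := Finset.sum_nonneg fun x _ => mul_nonneg (hP0 x).le
    (mul_nonneg (edgeVar_nonneg _ _) (mul_nonneg (edgeVar_nonneg _ _) (edgeVar_nonneg _ _)))
  have hτ1 : τ ≤ 1 := by
    rw [← wmean_const hP1 1]
    refine wmean_mono hP0 fun x => mul_le_one₀ (edgeVar_le_one _ _)
      (mul_nonneg (edgeVar_nonneg _ _) (edgeVar_nonneg _ _))
      (mul_le_one₀ (edgeVar_le_one _ _) (edgeVar_nonneg _ _) (edgeVar_le_one _ _))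
  have hm0 : 0 ≤ m := Finset.sum_nonneg fun x _ => mul_nonneg (hP0 x).le (edgeVar_nonneg _ _)
  have hm1 : m ≤ 1 := by
    rw [← wmean_const hP1 1]
    exact wmean_mono hP0 fun x => edgeVar_le_one _ _
  have hJ0 : J ≤ 0 := by
    rw [← wmean_const hP1 0]
    exact wmean_mono hP0 fun x => Ifun_nonpos (condEdge_pos nab x).le (condEdge_lt_one nab x).le
  have hn1 : (3 : ℝ) ≤ n := by exact_mod_cast (by omega : 3 ≤ n)
  have hE : wmean P (hamHat n α h)
      ≤ |α| + α * ((n - 1) * (n - 2) / 6) * τ + h * (n * (n - 1) / 2) * m := by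
    have h1 : wmean P (hamHat n α h) ≤ wmean P (fun x => |α| +
        (α / n * (triangleCount n x : ℝ) + h * (edgeCount n x : ℝ))) :=
      wmean_mono hP0 fun x => by
        have := (abs_le.1 (abs_hamHat_sub_le n α h x)).2
        linarith
    rw [wmean_add, wmean_add, wmean_const hP1, wmean_const_mul, wmean_const_mul,
      wmean_triangleCount hab hac hbc, wmean_edgeCount hab hac hbc] at h1
    refine h1.trans (le_of_eq ?_)
    change |α| + (α / n * ((n : ℝ) * (n - 1) * (n - 2) / 6 * τ)
      + h * ((n : ℝ) * (n - 1) / 2 * m)) = _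
    field_simp
    ring
  -- `J ≤ 0`, so the number of free edges may be rounded up to `n² / 2`
  have hF : -∑ e : {e : Edge n // ¬ Touches S e},
      wmean P (fun x => Ifun (condEdge n α h S e x)) ≤ -((n : ℝ) ^ 2 / 2 * J) := by
    have e1 : ∀ e : {e : Edge n // ¬ Touches S e},
        wmean P (fun x => Ifun (condEdge n α h S e x)) = J :=
      fun e => wmean_Ifun_condEdge_eq ha hb hc hab hac hbc e e.2
    rw [Finset.sum_congr rfl fun e _ => e1 e, Finset.sum_const, Finset.card_univ, nsmul_eq_mul]
    have c1 : (Fintype.card {e : Edge n // ¬ Touches S e} : ℝ) ≤ (n : ℝ) * (n - 1) / 2 := by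
      rw [← card_edge]
      exact_mod_cast Fintype.card_subtype_le _
    have c2 : (Fintype.card {e : Edge n // ¬ Touches S e} : ℝ) ≤ (n : ℝ) ^ 2 / 2 := by
      refine c1.trans ?_
      nlinarith
    have := mul_le_mul_of_nonneg_right c2 (neg_nonneg.2 hJ0)
    linarith
  have hpin : (Fintype.card {e : Edge n // Touches S e} : ℝ) * Real.log 2
      ≤ K * Real.log 2 * n := by
    have : (Fintype.card {e : Edge n // Touches S e} : ℝ) ≤ K * n := by
      exact_mod_cast (card_touches_le S).trans (Nat.mul_le_mul_right n hcard)
    have := mul_le_mul_of_nonneg_right this (Real.log_nonneg (by norm_num : (1 : ℝ) ≤ 2))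
    linarith
  -- replacing `(n - 1)(n - 2)` and `n(n - 1)` by `n²` costs only `O(n)`
  have r1 : α * ((n - 1) * (n - 2) / 6) * τ
      ≤ (n : ℝ) ^ 2 * (α / 6 * t) + (n : ℝ) ^ 2 * (|α| * δ / 3) + |α| / 2 * n := by
    have a1 : α * (τ - t) ≤ |α| * (2 * δ) := by
      refine (le_abs_self _).trans ?_
      rw [abs_mul]
      exact mul_le_mul_of_nonneg_left hτt (abs_nonneg _)
    have a2 : -α * τ ≤ |α| := by
      refine (mul_le_mul_of_nonneg_right (neg_le_abs α) hτ0).trans ?_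
      exact mul_le_of_le_one_right (abs_nonneg _) hτ1
    have a3 := mul_le_mul_of_nonneg_left a1 (by positivity : 0 ≤ (n : ℝ) ^ 2 / 6)
    have a4 := mul_le_mul_of_nonneg_left a2 (by linarith : 0 ≤ (3 * (n : ℝ) - 2) / 6)
    linarith [abs_nonneg α]
  have r2 : h * (n * (n - 1) / 2) * m ≤ (n : ℝ) ^ 2 * (h / 2 * m) + |h| / 2 * n := by
    have a2 : -h * m ≤ |h| := by
      refine (mul_le_mul_of_nonneg_right (neg_le_abs h) hm0).trans ?_
      exact mul_le_of_le_one_right (abs_nonneg _) hm1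
    have a4 := mul_le_mul_of_nonneg_left a2 (by positivity : 0 ≤ (n : ℝ) / 2)
    linarith
  have r3 := mul_le_mul_of_nonneg_left hmf (sq_nonneg (n : ℝ))
  have r4 : |α| ≤ |α| / 2 * n := by nlinarith [abs_nonneg α]
  have r5 : 0 ≤ |h| * n := by positivity
  have r6 : 0 ≤ |α| * n := by positivity
  have r7 : (n : ℝ) ^ 2 * (M + |α| * δ / 3) + (2 * |α| + |h| + K * Real.log 2) * n
      = (n : ℝ) ^ 2 * M + (n : ℝ) ^ 2 * (|α| * δ / 3) + 2 * (|α| * n) + |h| * n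
        + K * Real.log 2 * n := by ring
  have r8 : (n : ℝ) ^ 2 * (α / 6 * t + h / 2 * m - 1 / 2 * J)
      = (n : ℝ) ^ 2 * (α / 6 * t) + (n : ℝ) ^ 2 * (h / 2 * m) - (n : ℝ) ^ 2 / 2 * J := by ring
  rw [r7]
  rw [r8] at r3
  clear_value P A B C τ t m J
  linarith

lemma eventually_log_Zhat_le {α h M ε : ℝ} (hα : -2 ≤ α)
    (hM : ∀ u ∈ Set.Icc (0 : ℝ) 1, phiET α h u ≤ M) (hε : 0 < ε) :
    ∀ᶠ n : ℕ in atTop, Real.log (Zhat n α h) ≤ (n : ℝ) ^ 2 * (M + ε) := by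
  set δ : ℝ := ε / (|α| + 1) with hδ
  have hδ0 : 0 < δ := by positivity
  have hδε : |α| * δ ≤ ε := by
    rw [hδ, mul_div_assoc', div_le_iff₀ (by positivity)]
    nlinarith [abs_nonneg α]
  obtain ⟨K, hK⟩ := exists_nat_gt (1 / δ ^ 2)
  have hK0 : (0 : ℝ) < K := lt_trans (by positivity) hK
  have hKδ : 1 / (K : ℝ) ≤ δ ^ 2 := by
    rw [div_le_iff₀ hK0]
    rw [div_lt_iff₀ (by positivity)] at hK
    linarith
  set C := 2 * |α| + |h| + K * Real.log 2 with hC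
  obtain ⟨n₀, hn₀⟩ := exists_nat_ge (C / (ε / 2))
  filter_upwards [eventually_ge_atTop (K + 3), eventually_ge_atTop n₀] with n hn hn'
  have h1 := log_Zhat_le hα hM (by exact_mod_cast hK0) hn hδ0.le hKδ
  have h2 : C ≤ ε / 2 * n := by
    rw [div_le_iff₀ (by positivity)] at hn₀
    have : (n₀ : ℝ) ≤ n := by exact_mod_cast hn'
    nlinarith
  have h3 := mul_le_mul_of_nonneg_right h2 (Nat.cast_nonneg (α := ℝ) n)
  have h4 := mul_le_mul_of_nonneg_left hδε (sq_nonneg (n : ℝ))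
  have h5 : 0 ≤ (n : ℝ) ^ 2 * ε := by positivity
  nlinarith

/-! ### Lower bound on the free energy -/

/-- The product Bernoulli law: every edge is present independently with probability `u`. -/
def bern (n : ℕ) (u : ℝ) (x : Config n) : ℝ := ∏ e : Edge n, if x e then u else 1 - u

lemma bern_pos {n : ℕ} {u : ℝ} (hu : u ∈ Set.Ioo (0 : ℝ) 1) (x : Config n) : 0 < bern n u x := by
  refine Finset.prod_pos fun e _ => ?_
  split_ifs
  exacts [hu.1, sub_pos.2 hu.2]

lemma bern_prod (n : ℕ) (u : ℝ) (D : Finset (Edge n)) :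
    wmean (bern n u) (fun x => ∏ e ∈ D, edgeVar e x) = u ^ D.card := by
  have h := sum_prod_bool (fun (e : Edge n) (t : Bool) =>
    (if t then u else 1 - u) * (if e ∈ D then (if t then (1 : ℝ) else 0) else 1))
  have e1 : ∀ x : Config n, bern n u x * ∏ e ∈ D, edgeVar e x
      = ∏ e : Edge n, ((if x e then u else 1 - u) *
          (if e ∈ D then (if x e then (1 : ℝ) else 0) else 1)) := by
    intro x
    rw [Finset.prod_mul_distrib, Finset.prod_ite_mem, Finset.univ_inter]
    rfl
  have e2 : ∀ e : Edge n, ((if (true : Bool) then u else 1 - u) *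
        (if e ∈ D then (if (true : Bool) then (1 : ℝ) else 0) else 1)
      + (if (false : Bool) then u else 1 - u) *
        (if e ∈ D then (if (false : Bool) then (1 : ℝ) else 0) else 1))
      = if e ∈ D then u else 1 := by
    intro e
    split_ifs <;> simp_all
  unfold wmean
  rw [Finset.sum_congr rfl fun x _ => e1 x, h, Finset.prod_congr rfl fun e _ => e2 e,
    Finset.prod_ite_mem, Finset.univ_inter, Finset.prod_const]

lemma bern_sum (n : ℕ) (u : ℝ) : ∑ x, bern n u x = 1 := by
  simpa [wmean] using bern_prod n u ∅

lemma bern_edgeVar {n : ℕ} (u : ℝ) (e : Edge n) : wmean (bern n u) (edgeVar e) = u := by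
  simpa using bern_prod n u {e}

lemma bern_edgeCount (n : ℕ) (u : ℝ) :
    wmean (bern n u) (fun x => (edgeCount n x : ℝ)) = (n : ℝ) * (n - 1) / 2 * u := by
  simp only [edgeCount_eq_sum]
  rw [wmean_sum, Finset.sum_congr rfl fun e _ => bern_edgeVar u e, Finset.sum_const,
    Finset.card_univ, nsmul_eq_mul, card_edge]

lemma bern_triangleCount (n : ℕ) (u : ℝ) :
    wmean (bern n u) (fun x => (triangleCount n x : ℝ))
      = (n : ℝ) * (n - 1) * (n - 2) / 6 * u ^ 3 := by
  simp only [triangleCount_eq_sum]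
  rw [wmean_sum]
  have key : ∀ s ∈ Finset.powersetCard 3 (Finset.univ : Finset (Fin n)),
      wmean (bern n u) (triVar s) = u ^ 3 := by
    intro s hs
    obtain ⟨i, j, l, hij, hil, hjl, rfl⟩ :=
      Finset.card_eq_three.1 (Finset.mem_powersetCard.1 hs).2
    have d1 : mkEdge hij ≠ mkEdge hil := by
      intro h; have := congrArg Subtype.val h; simp only [mkEdge, Sym2.eq_iff] at this; grind
    have d2 : mkEdge hij ≠ mkEdge hjl := by
      intro h; have := congrArg Subtype.val h; simp only [mkEdge, Sym2.eq_iff] at this; grind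
    have d3 : mkEdge hil ≠ mkEdge hjl := by
      intro h; have := congrArg Subtype.val h; simp only [mkEdge, Sym2.eq_iff] at this; grind
    have := bern_prod n u {mkEdge hij, mkEdge hil, mkEdge hjl}
    rw [Finset.card_eq_three.2 ⟨_, _, _, d1, d2, d3, rfl⟩] at this
    rw [← this]
    congr 1
    funext x
    rw [triVar_eq hij hil hjl, Finset.prod_insert (by simp [d1, d2]),
      Finset.prod_insert (by simp [d3]), Finset.prod_singleton]
  rw [Finset.sum_congr rfl key, Finset.sum_const, Finset.card_powersetCard, Finset.card_univ,
    Fintype.card_fin, nsmul_eq_mul, cast_choose_three]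

/-- The Gibbs variational principle with the product Bernoulli law as trial measure. -/
lemma le_log_Zhat {n : ℕ} {α h u : ℝ} (hu : u ∈ Set.Ioo (0 : ℝ) 1) (hn : 3 ≤ n) :
    (n : ℝ) ^ 2 * phiET α h u - (2 * |α| + |h| + |Ifun u|) * n ≤ Real.log (Zhat n α h) := by
  have hG := wmean_log_le (bern_pos hu) (bern_sum n u) (gibbs_pos n α h) (gibbs_sum n α h)
  simp only [log_gibbs] at hG
  rw [wmean_sub, wmean_const (bern_sum n u)] at hG
  have hlog : ∀ x : Config n, Real.log (bern n u x) = ∑ e : Edge n,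
      (Real.log (1 - u) + (Real.log u - Real.log (1 - u)) * edgeVar e x) := by
    intro x
    unfold bern
    rw [Real.log_prod]
    · refine Finset.sum_congr rfl fun e _ => ?_
      unfold edgeVar
      cases x e <;> simp
    · intro e _
      split_ifs
      exacts [hu.1.ne', (sub_pos.2 hu.2).ne']
  have hI : ∀ e : Edge n, wmean (bern n u) (fun x =>
      Real.log (1 - u) + (Real.log u - Real.log (1 - u)) * edgeVar e x) = Ifun u := by
    intro e
    rw [wmean_add, wmean_const (bern_sum n u), wmean_const_mul, bern_edgeVar, Ifun]
    ring
  simp only [hlog] at hG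
  rw [wmean_sum, Finset.sum_congr rfl fun e _ => hI e, Finset.sum_const, Finset.card_univ,
    nsmul_eq_mul, card_edge] at hG
  have hn1 : (3 : ℝ) ≤ n := by exact_mod_cast hn
  have hE : -|α| + (α * ((n - 1) * (n - 2) / 6) * u ^ 3 + h * (n * (n - 1) / 2) * u)
      ≤ wmean (bern n u) (hamHat n α h) := by
    have h1 : wmean (bern n u) (fun x => -|α| +
        (α / n * (triangleCount n x : ℝ) + h * (edgeCount n x : ℝ)))
        ≤ wmean (bern n u) (hamHat n α h) :=
      wmean_mono (bern_pos hu) fun x => by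
        have := (abs_le.1 (abs_hamHat_sub_le n α h x)).1
        linarith
    rw [wmean_add, wmean_add, wmean_const (bern_sum n u), wmean_const_mul, wmean_const_mul,
      bern_triangleCount, bern_edgeCount] at h1
    refine le_trans (le_of_eq ?_) h1
    field_simp
  have p0 : 0 ≤ u ^ 3 := pow_nonneg hu.1.le 3
  have p1 : u ^ 3 ≤ 1 := pow_le_one₀ hu.1.le hu.2.le
  have a1 : α * u ^ 3 ≤ |α| :=
    (mul_le_mul_of_nonneg_right (le_abs_self α) p0).trans
      (mul_le_of_le_one_right (abs_nonneg _) p1)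
  have a2 : h * u ≤ |h| :=
    (mul_le_mul_of_nonneg_right (le_abs_self h) hu.1.le).trans
      (mul_le_of_le_one_right (abs_nonneg _) hu.2.le)
  have a3 : -Ifun u ≤ |Ifun u| := neg_le_abs _
  have b1 := mul_le_mul_of_nonneg_left a1 (by linarith : 0 ≤ (3 * (n : ℝ) - 2) / 6)
  have b2 := mul_le_mul_of_nonneg_left a2 (by positivity : 0 ≤ (n : ℝ) / 2)
  have b3 := mul_le_mul_of_nonneg_left a3 (by positivity : 0 ≤ (n : ℝ) / 2)
  have b4 : |α| * 3 ≤ |α| * n := mul_le_mul_of_nonneg_left hn1 (abs_nonneg _)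
  have b5 : 0 ≤ |h| * n := by positivity
  have b6 : 0 ≤ |Ifun u| * n := by positivity
  have b7 := abs_nonneg α
  unfold phiET
  linarith

lemma eventually_le_log_Zhat {α h u ε : ℝ} (hu : u ∈ Set.Ioo (0 : ℝ) 1) (hε : 0 < ε) :
    ∀ᶠ n : ℕ in atTop, (n : ℝ) ^ 2 * (phiET α h u - ε) ≤ Real.log (Zhat n α h) := by
  set C := 2 * |α| + |h| + |Ifun u| with hC
  obtain ⟨n₀, hn₀⟩ := exists_nat_ge (C / ε)
  filter_upwards [eventually_ge_atTop 3, eventually_ge_atTop n₀] with n hn hn'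
  have h1 := le_log_Zhat (α := α) (h := h) hu hn
  have h2 : C ≤ ε * n := by
    rw [div_le_iff₀ hε] at hn₀
    have : (n₀ : ℝ) ≤ n := by exact_mod_cast hn'
    nlinarith
  have h3 := mul_le_mul_of_nonneg_right h2 (Nat.cast_nonneg (α := ℝ) n)
  nlinarith

/-! ### Convexity in `α` and the limit -/

/-- Convexity of `log Ẑ` in `α`: the mean of `⌊T/n⌋` is a subgradient. -/
lemma mul_expHat_le (n : ℕ) (α h t : ℝ) :
    t * expHat n α h (floorTn n) ≤ Real.log (Zhat n (α + t) h) - Real.log (Zhat n α h) := by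
  have hJ := exp_wmean_le (gibbs_pos n α h) (gibbs_sum n α h) (fun x => t * floorTn n x)
  have e : wmean (gibbs n α h) (fun x => Real.exp (t * floorTn n x))
      = Zhat n (α + t) h / Zhat n α h := by
    unfold wmean gibbs
    rw [show Zhat n (α + t) h = ∑ x : Config n, Real.exp (hamHat n (α + t) h x) from rfl,
      Finset.sum_div]
    refine Finset.sum_congr rfl fun x _ => ?_
    rw [div_mul_eq_mul_div, ← Real.exp_add]
    congr 2
    simp only [hamHat]; ring
  rw [e, wmean_const_mul, ← expHat_eq_wmean] at hJ
  have := (Real.le_log_iff_exp_le (div_pos (Zhat_pos _ _ _) (Zhat_pos _ _ _))).2 hJ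
  rwa [Real.log_div (Zhat_pos _ _ _).ne' (Zhat_pos _ _ _).ne'] at this

/-- The mean of `⌊T/n⌋` is controlled by the cube of the maximizer `v` at the perturbed parameter
`α + t`, since `v` competes with the maximizer `u` at `α`; the sign of `t` decides the direction. -/
lemma eventually_mul_expHat_le {α h t u v ε : ℝ} (hαt : -2 ≤ α + t) (hu : u ∈ Set.Ioo (0 : ℝ) 1)
    (hmaxu : phiET α h v ≤ phiET α h u)
    (hmaxv : ∀ w ∈ Set.Icc (0 : ℝ) 1, phiET (α + t) h w ≤ phiET (α + t) h v) (hε : 0 < ε) :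
    ∀ᶠ n : ℕ in atTop, t * (6 / (n : ℝ) ^ 2 * expHat n α h (floorTn n)) ≤ t * v ^ 3 + ε := by
  filter_upwards [eventually_log_Zhat_le hαt hmaxv (by positivity : 0 < ε / 12),
    eventually_le_log_Zhat (α := α) (h := h) hu (by positivity : 0 < ε / 12),
    eventually_gt_atTop 0] with n h1 h2 hn
  have h3 := mul_expHat_le n α h t
  have hn' : (0 : ℝ) < (n : ℝ) ^ 2 := by positivity
  have hd : phiET (α + t) h v - phiET α h u ≤ t * v ^ 3 / 6 := by
    have : phiET (α + t) h v = phiET α h v + t * v ^ 3 / 6 := by unfold phiET; ring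
    linarith
  have h4 : t * expHat n α h (floorTn n) ≤ (n : ℝ) ^ 2 * ((t * v ^ 3 + ε) / 6) := by
    have := mul_le_mul_of_nonneg_left hd hn'.le
    nlinarith
  calc t * (6 / (n : ℝ) ^ 2 * expHat n α h (floorTn n))
      = 6 / (n : ℝ) ^ 2 * (t * expHat n α h (floorTn n)) := by ring
    _ ≤ 6 / (n : ℝ) ^ 2 * ((n : ℝ) ^ 2 * ((t * v ^ 3 + ε) / 6)) :=
        mul_le_mul_of_nonneg_left h4 (by positivity)
    _ = t * v ^ 3 + ε := by field_simp

theorem mean_floor_triangle_limit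
    (α h : ℝ) (hα : α > -2)
    (U : Set (ℝ × ℝ)) (hUopen : IsOpen U) (hmemU : (α, h) ∈ U)
    (ustar : ℝ × ℝ → ℝ) (hC1 : ContDiffOn ℝ 1 ustar U)
    (hrange : ∀ p ∈ U, ustar p ∈ Set.Ioo (0 : ℝ) 1)
    (hmax : ∀ p ∈ U, ∀ u ∈ Set.Icc (0 : ℝ) 1, phiET p.1 p.2 u ≤ phiET p.1 p.2 (ustar p))
    (huniq : ∀ p ∈ U, ∀ u ∈ Set.Icc (0 : ℝ) 1,
      (∀ w ∈ Set.Icc (0 : ℝ) 1, phiET p.1 p.2 w ≤ phiET p.1 p.2 u) → u = ustar p)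
    (hanal : AnalyticOnNhd ℝ (fun p : ℝ × ℝ => freeEnergy p.1 p.2) U) :
    Tendsto (fun n : ℕ => 6 / (n : ℝ) ^ 2 * expHat n α h (floorTn n)) atTop
      (𝓝 (ustar (α, h) ^ 3)) := by
  -- `t ↦ u*(α + t, h)³` is continuous at `0`
  have hcont : ContinuousAt (fun t : ℝ => ustar (α + t, h) ^ 3) 0 := by
    have h1 : ContinuousAt ustar (α + 0, h) := by
      rw [add_zero]; exact hC1.continuousOn.continuousAt (hUopen.mem_nhds hmemU)
    have h2 : ContinuousAt (fun t : ℝ => (α + t, h)) 0 := by fun_prop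
    exact (ContinuousAt.comp (f := fun t : ℝ => (α + t, h)) (g := ustar) h1 h2).pow 3
  have hUev : ∀ᶠ t : ℝ in 𝓝 0, (α + t, h) ∈ U := by
    have h2 : ContinuousAt (fun t : ℝ => (α + t, h)) 0 := by fun_prop
    exact h2.eventually (hUopen.mem_nhds (by simpa using hmemU))
  have hαev : ∀ᶠ t : ℝ in 𝓝 0, -2 < α + t := by
    have h2 : ContinuousAt (fun t : ℝ => α + t) 0 := by fun_prop
    exact h2.eventually (lt_mem_nhds (by simpa using hα))
  have main : ∀ t : ℝ, (α + t, h) ∈ U → -2 < α + t → ∀ ε > 0, ∀ᶠ n : ℕ in atTop,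
      t * (6 / (n : ℝ) ^ 2 * expHat n α h (floorTn n)) ≤ t * ustar (α + t, h) ^ 3 + ε := by
    intro t htU ht ε hε
    have hv := hrange _ htU
    exact eventually_mul_expHat_le ht.le (hrange _ hmemU)
      (hmax _ hmemU _ ⟨hv.1.le, hv.2.le⟩) (hmax _ htU) hε
  rw [Metric.tendsto_nhds]
  intro ε hε
  have hclose : ∀ᶠ t : ℝ in 𝓝 0, |ustar (α + t, h) ^ 3 - ustar (α, h) ^ 3| < ε / 2 := by
    have := Metric.tendsto_nhds.1 hcont.tendsto (ε / 2) (by positivity)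
    simpa [Real.dist_eq] using this
  obtain ⟨r, hr, hball⟩ := Metric.eventually_nhds_iff.1 (hUev.and (hαev.and hclose))
  have hs : 0 < r / 2 := by positivity
  obtain ⟨p1, p2, p3⟩ := hball (y := r / 2) (by
    rw [Real.dist_eq, sub_zero, abs_of_pos hs]; linarith)
  obtain ⟨q1, q2, q3⟩ := hball (y := -(r / 2)) (by
    rw [Real.dist_eq, sub_zero, abs_neg, abs_of_pos hs]; linarith)
  filter_upwards [main _ p1 p2 (r / 2 * (ε / 2)) (by positivity),
    main _ q1 q2 (r / 2 * (ε / 2)) (by positivity)] with n hn1 hn2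
  set X := 6 / (n : ℝ) ^ 2 * expHat n α h (floorTn n)
  have hX1 : X ≤ ustar (α + r / 2, h) ^ 3 + ε / 2 := by
    refine le_of_mul_le_mul_left ?_ hs
    linarith
  have hX2 : ustar (α + -(r / 2), h) ^ 3 - ε / 2 ≤ X := by
    refine le_of_mul_le_mul_left ?_ hs
    linarith
  rw [abs_lt] at p3 q3
  rw [Real.dist_eq, abs_lt]
  constructor <;> linarith [p3.1, p3.2, q3.1, q3.2]
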